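/- arXiv:1204.1938 — 3 statements merged into one kernel-verified Lean document; each statement's English description precedes it below -/
import Mathlib

section
/- For every N ≥ 2 there is a constant C_N depending only on N such that: if F(X) = Σ_{i,j=1}^N f_{ij} X_i X_j is a nonzero integral quadratic form in N variables, Λ ⊆ ℤ^N is a full-rank sublattice, and 1 ≤ L ≤ N is such that Λ contains L linearly independent points y_1, …, y_L for which F vanishes identically on the ℚ-span of y_1, …, y_L, then there exist L linearly independent points x_1, …, x_L ∈ Λ such that F vanishes identically on the ℚ-span of x_1, …, x_L and |x_1| ⋯ |x_L| ≤ C_N · |F|^{(N−L)/2} · det(Λ). -/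
/-- The sup-norm of an integer vector: `max_i |x_i|`. -/
def supNorm {N : ℕ} (x : Fin N → ℤ) : ℕ := Finset.univ.sup fun i => (x i).natAbs

/-- Membership in the full-rank sublattice of `ℤ^N` whose ℤ-basis consists of the rows of the
nonsingular integer matrix `B`. -/
def memLattice {N : ℕ} (B : Matrix (Fin N) (Fin N) ℤ) (x : Fin N → ℤ) : Prop :=
  ∃ c : Fin N → ℤ, ∀ j, x j = ∑ i, c i * B i j

/-- The integral quadratic form `F` vanishes identically on the ℚ-span of the vectors `x`. -/
def VanishesOnSpan {N L : ℕ} (f : Fin N → Fin N → ℤ) (x : Fin L → (Fin N → ℤ)) : Prop :=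
  ∀ w ∈ Submodule.span ℚ (Set.range fun k => fun j => ((x k j : ℚ))),
    ∑ i, ∑ j, (f i j : ℚ) * w i * w j = 0

/-!
Among all systems of `L` independent points of `Λ` with totally isotropic span, let `Y` minimize the
Gram determinant. A reduction of `Λ` modulo the span of `Y` in the style of Hermite bounds the
product of the squared distances of `N - L` lattice points from that span, times the Gram
determinant of `Y`, by a constant times `det(Λ)^2`. So it suffices to see that no lattice point `y`
outside the span of `Y` is close to it. On the span of `y` and `Y` the form is the coordinate of `y`
times a linear form, which is integral at `y` and `Y` and whose norm is at most a multiple of `|F|`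
times the distance of `y`. Its kernel contains a further isotropic system of small Gram determinant,
and minimality of `Y` bounds the squared distance of `y` from below by a multiple of `1 / |F|`; if
the linear form vanishes, a coordinate function takes its place. Finally `Y` itself is replaced by a
reduced system.
-/

open Submodule Module
open LinearMap (BilinForm)

section LinearIndependentModSubspace

variable {𝕜 V : Type*} [Field 𝕜] [AddCommGroup V] [Module 𝕜 V] {K : Submodule 𝕜 V} {n : ℕ}

theorem linearIndependent_mkQ_comp_iff {w : Fin n → V} :
    LinearIndependent 𝕜 (K.mkQ ∘ w) ↔ ∀ c : Fin n → 𝕜, ∑ i, c i • w i ∈ K → ∀ i, c i = 0 := by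
  rw [Fintype.linearIndependent_iff]
  refine forall_congr' fun c => ?_
  rw [← (Submodule.Quotient.mk_eq_zero K), ← mkQ_apply, map_sum]
  simp only [Function.comp_apply, map_smul]

theorem linearIndependent_mkQ_comp_cons_sub_smul {y : V} (hy : y ∉ K) {w : Fin n → V}
    (hw : LinearIndependent 𝕜 ((span 𝕜 {y} ⊔ K).mkQ ∘ w)) (m : Fin n → 𝕜) :
    LinearIndependent 𝕜 (K.mkQ ∘ (Fin.cons y fun i => w i - m i • y : Fin (n + 1) → V)) := by
  rw [linearIndependent_mkQ_comp_iff] at hw ⊢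
  intro c hc
  simp only [Fin.sum_univ_succ, Fin.cons_zero, Fin.cons_succ] at hc
  have tail_eq_zero : ∀ i : Fin n, c i.succ = 0 := by
    refine hw (fun i => c i.succ) ?_
    have sum_eq : ∑ i : Fin n, c i.succ • w i = (∑ i : Fin n, c i.succ * m i - c 0) • y +
        (c 0 • y + ∑ i : Fin n, c i.succ • (w i - m i • y)) := by
      simp only [smul_sub, Finset.sum_sub_distrib, sub_smul, Finset.sum_smul, mul_smul]
      abel
    rw [sum_eq]
    exact add_mem_sup (smul_mem _ _ (mem_span_singleton_self y)) hc
  have head_eq_zero : c 0 = 0 := by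
    by_contra h
    simp only [tail_eq_zero, zero_smul, Finset.sum_const_zero, add_zero] at hc
    exact hy ((smul_mem_iff K h).1 hc)
  exact Fin.cases head_eq_zero tail_eq_zero

theorem linearIndependent_of_span_range_eq {v w : Fin n → V} (hv : LinearIndependent 𝕜 v)
    (h : span 𝕜 (Set.range w) = span 𝕜 (Set.range v)) : LinearIndependent 𝕜 w := by
  rw [linearIndependent_iff_card_eq_finrank_span, Set.finrank, h, finrank_span_eq_card hv]

end LinearIndependentModSubspace

section GramDeterminant

variable {E : Type*} [NormedAddCommGroup E] [InnerProductSpace ℝ E]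
variable {ι : Type*} [Fintype ι] [DecidableEq ι]

/-- The Gram determinant of a finite family, i.e. the square of the covolume of the lattice which
the family generates when it is linearly independent. -/
noncomputable def gramDet (v : ι → E) : ℝ := (Matrix.gram ℝ v).det

theorem gramDet_nonneg (v : ι → E) : 0 ≤ gramDet v :=
  (Matrix.posSemidef_gram ℝ v).det_nonneg

theorem gramDet_ne_zero_iff {v : ι → E} : gramDet v ≠ 0 ↔ LinearIndependent ℝ v :=
  Matrix.det_gram_ne_zero_iff_linearIndependent

theorem gramDet_pos {v : ι → E} (hv : LinearIndependent ℝ v) : 0 < gramDet v :=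
  (gramDet_nonneg v).lt_of_ne' (gramDet_ne_zero_iff.2 hv)

theorem gramDet_sum_smul (A : Matrix ι ι ℝ) (v : ι → E) :
    gramDet (fun i => ∑ j, A i j • v j) = A.det ^ 2 * gramDet v := by
  have gram_eq : Matrix.gram ℝ (fun i => ∑ j, A i j • v j) = A * Matrix.gram ℝ v * A.transpose := by
    ext i j
    simp only [Matrix.gram_apply, Matrix.mul_apply, Matrix.transpose_apply, sum_inner, inner_sum,
      real_inner_smul_left, real_inner_smul_right, Finset.sum_mul]
    exact Finset.sum_congr rfl fun a _ => Finset.sum_congr rfl fun b _ => by ring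
  rw [gramDet, gram_eq, Matrix.det_mul, Matrix.det_mul, Matrix.det_transpose, gramDet]
  ring

theorem gramDet_update_sum_smul (v : ι → E) (i : ι) (c : ι → ℝ) :
    gramDet (Function.update v i (∑ j, c j • v j)) = c i ^ 2 * gramDet v := by
  have det_eq : ((1 : Matrix ι ι ℝ).updateRow i c).det = c i := by
    have hc : c = ∑ j, c j • (1 : Matrix ι ι ℝ) j := by
      ext k
      simp [Matrix.one_apply]
    conv_lhs => rw [hc, Matrix.det_updateRow_sum]
    simp
  have update_eq : Function.update v i (∑ j, c j • v j) =
      fun k => ∑ j, (1 : Matrix ι ι ℝ).updateRow i c k j • v j := by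
    ext k
    obtain rfl | hk := eq_or_ne k i
    · simp
    · simp [hk, Matrix.one_apply, ite_smul]
  rw [update_eq, gramDet_sum_smul, det_eq]

theorem gramDet_le_of_mem_span_int {v w : ι → E} (hw : LinearIndependent ℝ w)
    (hwv : ∀ i, w i ∈ span ℤ (Set.range v)) : gramDet v ≤ gramDet w := by
  choose c hc using fun i => (mem_span_range_iff_exists_fun ℤ).1 (hwv i)
  have gramDet_eq : gramDet w = ((Matrix.of c).det : ℝ) ^ 2 * gramDet v := by
    rw [Int.cast_det, ← gramDet_sum_smul]
    congr 1 with i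
    simp [← hc, Int.cast_smul_eq_zsmul]
  have det_ne_zero : (Matrix.of c).det ≠ 0 := by
    intro h
    simp [h, gramDet_ne_zero_iff.2 hw] at gramDet_eq
  have one_le_det_sq : (1 : ℝ) ≤ ((Matrix.of c).det : ℝ) ^ 2 := by
    exact_mod_cast Int.add_one_le_of_lt (sq_pos_of_ne_zero det_ne_zero)
  rw [gramDet_eq]
  exact le_mul_of_one_le_left (gramDet_nonneg v) one_le_det_sq

end GramDeterminant

section SquaredDistance

variable {E : Type*} [NormedAddCommGroup E] [InnerProductSpace ℝ E]

/-- The squared distance from `x` to the subspace `K`, encoded as the squared norm of the component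
of `x` orthogonal to `K`. -/
noncomputable def sqDist (K : Submodule ℝ E) [K.HasOrthogonalProjection] (x : E) : ℝ :=
  ‖Kᗮ.starProjection x‖ ^ 2

variable (K : Submodule ℝ E) [K.HasOrthogonalProjection]

theorem sqDist_nonneg (x : E) : 0 ≤ sqDist K x := sq_nonneg _

theorem sqDist_pos {x : E} (hx : x ∉ K) : 0 < sqDist K x := by
  have proj_ne_zero : Kᗮ.starProjection x ≠ 0 := by
    rwa [Ne, starProjection_apply_eq_zero_iff, orthogonal_orthogonal]
  exact pow_pos (norm_pos_iff.2 proj_ne_zero) 2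

theorem sqDist_smul_add (t : ℝ) (y : E) {z : E} (hz : z ∈ K) :
    sqDist K (t • y + z) = t ^ 2 * sqDist K y := by
  rw [sqDist, map_add, map_smul, starProjection_orthogonal_apply_eq_zero hz, add_zero, norm_smul,
    mul_pow, Real.norm_eq_abs, sq_abs, sqDist]

theorem sqDist_bot (x : E) : sqDist (⊥ : Submodule ℝ E) x = ‖x‖ ^ 2 := by
  rw [sqDist, starProjection_eq_self_iff.2 (by simp)]

theorem sq_sub_round_le (t : ℝ) : (t - round t) ^ 2 ≤ 1 / 4 := by
  nlinarith [sq_le_sq.2 ((abs_sub_round t).trans (le_abs_self (1 / 2)))]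

theorem exists_int_sqDist_sub_zsmul_le (y x : E) [(span ℝ {y} ⊔ K).HasOrthogonalProjection] :
    ∃ m : ℤ, sqDist K (x - m • y) ≤ sqDist (span ℝ {y} ⊔ K) x + 1 / 4 * sqDist K y := by
  set K' := span ℝ {y} ⊔ K
  set P := Kᗮ.starProjection
  set r := K'ᗮ.starProjection x
  obtain ⟨a, ha, z, hz, haz⟩ := mem_sup.1 (K'.starProjection_apply_mem x)
  obtain ⟨t, rfl⟩ := mem_span_singleton.1 ha
  have hr : r ∈ K'ᗮ := K'ᗮ.starProjection_apply_mem x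
  have hx : x = t • y + z + r := by
    rw [haz, starProjection_add_starProjection_orthogonal]
  have hPr : P r = r := starProjection_eq_self_iff.2 (orthogonal_le le_sup_right hr)
  have hPy : P y ∈ K' := by
    rw [show P y = y - K.starProjection y from starProjection_orthogonal_val y]
    exact sub_mem (mem_sup_left (mem_span_singleton_self y))
      (mem_sup_right (K.starProjection_apply_mem y))
  have hPx : P (x - round t • y) = (t - round t) • P y + r := by
    rw [map_sub, hx, map_add, map_add, map_smul, map_zsmul, hPr,
      show P z = 0 from starProjection_orthogonal_apply_eq_zero hz, ← Int.cast_smul_eq_zsmul ℝ]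
    module
  have pythagoras : sqDist K (x - round t • y) = (t - round t) ^ 2 * sqDist K y + sqDist K' x := by
    rw [sqDist, show Kᗮ.starProjection (x - round t • y) = _ from hPx, norm_add_sq_real,
      real_inner_smul_left, inner_right_of_mem_orthogonal hPy hr, norm_smul, mul_pow,
      Real.norm_eq_abs, sq_abs, sqDist, sqDist]
    ring
  refine ⟨round t, ?_⟩
  rw [pythagoras]
  nlinarith [sq_sub_round_le t, sqDist_nonneg K y]

variable {k : ℕ}

theorem gramDet_cons_of_orthogonal {z : E} {v : Fin k → E} (h : ∀ i, inner ℝ z (v i) = 0) :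
    gramDet (Fin.cons z v : Fin (k + 1) → E) = ‖z‖ ^ 2 * gramDet v := by
  rw [gramDet, Matrix.det_succ_row_zero, Fin.sum_univ_succ]
  simp only [Matrix.gram_apply, Fin.cons_zero, Fin.cons_succ, h, mul_zero, zero_mul,
    Finset.sum_const_zero, add_zero, Fin.val_zero, pow_zero, one_mul, real_inner_self_eq_norm_sq]
  rfl

variable [FiniteDimensional ℝ E]

theorem gramDet_cons (y : E) (v : Fin k → E) :
    gramDet (Fin.cons y v : Fin (k + 1) → E) = sqDist (span ℝ (Set.range v)) y * gramDet v := by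
  set K := span ℝ (Set.range v)
  set z := Kᗮ.starProjection y with hz
  obtain ⟨c, hc⟩ := (mem_span_range_iff_exists_fun ℝ).1 (K.starProjection_apply_mem y)
  have cons_eq_update : (Fin.cons y v : Fin (k + 1) → E) = Function.update (Fin.cons z v) 0
      (∑ j, (Fin.cons 1 c : Fin (k + 1) → ℝ) j • (Fin.cons z v : Fin (k + 1) → E) j) := by
    rw [Fin.update_cons_zero, Fin.sum_univ_succ]
    simp only [Fin.cons_zero, Fin.cons_succ, one_smul, hc]
    rw [hz, add_comm (Kᗮ.starProjection y), starProjection_add_starProjection_orthogonal]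
  have z_orthogonal : ∀ i, inner ℝ z (v i) = 0 := fun i =>
    inner_left_of_mem_orthogonal (subset_span (Set.mem_range_self i))
      (Kᗮ.starProjection_apply_mem y)
  rw [cons_eq_update, gramDet_update_sum_smul, gramDet_cons_of_orthogonal z_orthogonal, sqDist]
  simp [hz]

end SquaredDistance

section Reduction

variable {E : Type*} [NormedAddCommGroup E] [InnerProductSpace ℝ E]

/-- A real bilinear form is integral on the lattice `Λ` if it takes integer values at pairs of
points of `Λ`. With the inner product as bilinear form, `Λ` is an integral lattice. -/
def IsIntegralOn (B : BilinForm ℝ E) (Λ : Submodule ℤ E) : Prop :=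
  ∀ x ∈ Λ, ∀ y ∈ Λ, ∃ n : ℤ, B x y = n

/-- `v` is a primitive system of the lattice `Λ`: a `ℤ`-basis of the intersection of `Λ` with a
real subspace. -/
structure IsPrimitiveSystem (Λ : Submodule ℤ E) {k : ℕ} (v : Fin k → E) : Prop where
  linearIndependent : LinearIndependent ℝ v
  mem : ∀ i, v i ∈ Λ
  mem_span_int : ∀ x ∈ Λ, x ∈ span ℝ (Set.range v) → x ∈ span ℤ (Set.range v)

variable {Λ : Submodule ℤ E} {k n : ℕ}

theorem IsIntegralOn.mono {B : BilinForm ℝ E} {Λ' : Submodule ℤ E} (h : IsIntegralOn B Λ)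
    (hle : Λ' ≤ Λ) : IsIntegralOn B Λ' :=
  fun x hx y hy => h x (hle hx) y (hle hy)

theorem exists_gramDet_eq_natCast (hΛ : IsIntegralOn (innerₗ E) Λ) {v : Fin k → E}
    (hv : ∀ i, v i ∈ Λ) : ∃ n : ℕ, gramDet v = n := by
  choose g hg using fun i j => hΛ (v i) (hv i) (v j) (hv j)
  have gramDet_eq : gramDet v = ((Matrix.of g).det : ℤ) := by
    rw [gramDet, Int.cast_det]
    congr 1 with i j
    simp [← hg]
  have det_nonneg : 0 ≤ (Matrix.of g).det := by exact_mod_cast gramDet_eq ▸ gramDet_nonneg v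
  obtain ⟨n, hn⟩ := Int.eq_ofNat_of_zero_le det_nonneg
  exact ⟨n, by simp [gramDet_eq, hn]⟩

theorem exists_isMinOn_gramDet (hΛ : IsIntegralOn (innerₗ E) Λ) {S : Set (Fin k → E)}
    (hS : ∀ v ∈ S, ∀ i, v i ∈ Λ) (hne : S.Nonempty) : ∃ v ∈ S, IsMinOn gramDet S v := by
  set values : Set ℕ := {n | ∃ v ∈ S, gramDet v = n}
  have values_nonempty : values.Nonempty :=
    let ⟨v, hv⟩ := hne
    let ⟨n, hn⟩ := exists_gramDet_eq_natCast hΛ (hS v hv)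
    ⟨n, v, hv, hn⟩
  obtain ⟨v, hv, hvn⟩ := Nat.sInf_mem values_nonempty
  refine ⟨v, hv, isMinOn_iff.2 fun w hw => ?_⟩
  obtain ⟨n, hn⟩ := exists_gramDet_eq_natCast hΛ (hS w hw)
  rw [hvn, hn]
  exact_mod_cast Nat.sInf_le (show n ∈ values from ⟨w, hw, hn⟩)

theorem isPrimitiveSystem_of_forall_gramDet_le {v : Fin k → E} (hv : LinearIndependent ℝ v)
    (hvΛ : ∀ i, v i ∈ Λ)
    (hmin : ∀ w : Fin k → E, LinearIndependent ℝ w → (∀ i, w i ∈ Λ) →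
      (∀ i, w i ∈ span ℝ (Set.range v)) → gramDet v ≤ gramDet w) :
    IsPrimitiveSystem Λ v := by
  refine ⟨hv, hvΛ, fun x hx hxv => ?_⟩
  obtain ⟨t, rfl⟩ := (mem_span_range_iff_exists_fun ℝ).1 hxv
  set rounded := ∑ i, round (t i) • v i with hrounded
  set frac := ∑ i, (t i - round (t i)) • v i with hfrac
  have rounded_mem : rounded ∈ span ℤ (Set.range v) :=
    sum_mem fun i _ => smul_mem _ _ (subset_span ⟨i, rfl⟩)
  have add_eq : ∑ i, t i • v i = rounded + frac := by
    simp only [hrounded, hfrac, sub_smul, Finset.sum_sub_distrib, Int.cast_smul_eq_zsmul,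
      add_sub_cancel]
  have frac_mem : frac ∈ Λ := by
    rw [add_eq] at hx
    exact (Λ.add_mem_iff_right (span_le.2 (Set.range_subset_iff.2 hvΛ) rounded_mem)).1 hx
  have coeff_eq_zero : ∀ i, t i - round (t i) = 0 := by
    intro i
    by_contra hne
    have gramDet_update := gramDet_update_sum_smul v i fun j => t j - round (t j)
    rw [← hfrac] at gramDet_update
    have update_linearIndependent : LinearIndependent ℝ (Function.update v i frac) :=
      gramDet_ne_zero_iff.1 (gramDet_update ▸
        mul_ne_zero (pow_ne_zero 2 hne) (gramDet_ne_zero_iff.2 hv))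
    have forall_update_mem {p : E → Prop} (hp : p frac) (hpv : ∀ j, p (v j)) (j : Fin k) :
        p (Function.update v i frac j) :=
      (Function.forall_update_iff v fun _ => p).2 ⟨hp, fun j _ => hpv j⟩ j
    have gramDet_le := hmin _ update_linearIndependent (forall_update_mem frac_mem hvΛ)
      (forall_update_mem (sum_mem fun j _ => smul_mem _ _ (subset_span ⟨j, rfl⟩))
        fun j => subset_span ⟨j, rfl⟩)
    nlinarith [sq_sub_round_le (t i), gramDet_pos hv]
  have frac_eq_zero : frac = 0 := by simp [hfrac, coeff_eq_zero]
  rwa [add_eq, frac_eq_zero, add_zero]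

variable [FiniteDimensional ℝ E]

theorem exists_isMinOn_sqDist (hΛ : IsIntegralOn (innerₗ E) Λ) {v : Fin k → E}
    (hv : LinearIndependent ℝ v) (hvΛ : ∀ i, v i ∈ Λ)
    (hne : ∃ y ∈ Λ, y ∉ span ℝ (Set.range v)) :
    ∃ y ∈ Λ, y ∉ span ℝ (Set.range v) ∧
      IsMinOn (sqDist (span ℝ (Set.range v))) {y | y ∈ Λ ∧ y ∉ span ℝ (Set.range v)} y := by
  set S := {y | y ∈ Λ ∧ y ∉ span ℝ (Set.range v)}
  obtain ⟨-, ⟨y, hy, rfl⟩, hmin⟩ := exists_isMinOn_gramDet hΛ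
    (S := (fun y => (Fin.cons y v : Fin (k + 1) → E)) '' S)
    (by rintro - ⟨y, hy, rfl⟩; exact Fin.forall_fin_succ.2 ⟨hy.1, hvΛ⟩) (Set.Nonempty.image _ hne)
  refine ⟨y, hy.1, hy.2, isMinOn_iff.2 fun y' hy' => ?_⟩
  have gramDet_le := isMinOn_iff.1 hmin _ ⟨y', hy', rfl⟩
  rw [gramDet_cons, gramDet_cons] at gramDet_le
  exact le_of_mul_le_mul_right gramDet_le (gramDet_pos hv)

theorem IsPrimitiveSystem.cons {v : Fin k → E} (hv : IsPrimitiveSystem Λ v) {y : E} (hy : y ∈ Λ)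
    (hyv : y ∉ span ℝ (Set.range v))
    (hmin : IsMinOn (sqDist (span ℝ (Set.range v))) {y | y ∈ Λ ∧ y ∉ span ℝ (Set.range v)} y) :
    IsPrimitiveSystem Λ (Fin.cons y v : Fin (k + 1) → E) := by
  refine ⟨linearIndependent_finCons.2 ⟨hv.linearIndependent, hyv⟩,
    Fin.forall_fin_succ.2 ⟨hy, hv.mem⟩, fun x hx hxs => ?_⟩
  rw [Fin.range_cons, span_insert] at hxs
  obtain ⟨a, ha, z, hz, rfl⟩ := mem_sup.1 hxs
  obtain ⟨t, rfl⟩ := mem_span_singleton.1 ha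
  set x' := (t - round t) • y + z
  have hxx' : t • y + z = round t • y + x' := by
    rw [← Int.cast_smul_eq_zsmul ℝ]
    module
  rw [hxx'] at hx ⊢
  have hx'Λ : x' ∈ Λ := (Λ.add_mem_iff_right (Λ.smul_mem _ hy)).1 hx
  have hx'v : x' ∈ span ℝ (Set.range v) := by
    by_contra hx'v
    have hle := isMinOn_iff.1 hmin x' ⟨hx'Λ, hx'v⟩
    rw [sqDist_smul_add _ _ _ hz] at hle
    nlinarith [sq_sub_round_le t, sqDist_pos _ hyv]
  rw [Fin.range_cons]
  exact add_mem (smul_mem _ _ (subset_span (Set.mem_insert _ _)))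
    (span_mono (Set.subset_insert _ _) (hv.mem_span_int _ hx'Λ hx'v))

theorem exists_int_sqDist_sub_zsmul_le_mul {K : Submodule ℝ E} {y : E} (hy : y ∈ Λ)
    (hmin : IsMinOn (sqDist K) {y | y ∈ Λ ∧ y ∉ K} y) {x : E} (hx : x ∈ Λ)
    (hxK : x ∉ span ℝ {y} ⊔ K) :
    ∃ m : ℤ, sqDist K (x - m • y) ≤ 4 / 3 * sqDist (span ℝ {y} ⊔ K) x := by
  obtain ⟨m, hm⟩ := exists_int_sqDist_sub_zsmul_le K y x
  have sub_notMem : x - m • y ∉ K := fun hmem => hxK <| by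
    rw [← sub_add_cancel x (m • y), add_comm, ← Int.cast_smul_eq_zsmul ℝ]
    rw [← Int.cast_smul_eq_zsmul ℝ] at hmem
    exact add_mem_sup (smul_mem _ _ (mem_span_singleton_self y)) hmem
  have sqDist_le := isMinOn_iff.1 hmin _ ⟨Λ.sub_mem hx (Λ.smul_mem m hy), sub_notMem⟩
  exact ⟨m, by linarith⟩

theorem exists_mem_notMem_span_range {r : ℕ} {b : Fin r → E} (hb : LinearIndependent ℝ b)
    (hbΛ : ∀ i, b i ∈ Λ) (v : Fin k → E) (hkr : k < r) :
    ∃ y ∈ Λ, y ∉ span ℝ (Set.range v) := by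
  by_contra! hΛv
  have span_le_span : span ℝ (Set.range b) ≤ span ℝ (Set.range v) :=
    span_le.2 (Set.range_subset_iff.2 fun i => hΛv _ (hbΛ i))
  have finrank_le := Submodule.finrank_mono span_le_span
  rw [finrank_span_eq_card hb, Fintype.card_fin] at finrank_le
  have card_le : finrank ℝ (span ℝ (Set.range v)) ≤ k := by
    simpa [Set.finrank] using finrank_range_le_card (R := ℝ) v
  omega

theorem IsPrimitiveSystem.gramDet_le {v b : Fin k → E} (hv : IsPrimitiveSystem Λ v)
    (hb : LinearIndependent ℝ b) (hbΛ : span ℤ (Set.range b) = Λ) : gramDet v ≤ gramDet b := by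
  have span_le_span : span ℝ (Set.range v) ≤ span ℝ (Set.range b) := by
    refine span_le.2 (Set.range_subset_iff.2 fun i => ?_)
    exact span_le_restrictScalars ℤ ℝ _ (hbΛ ▸ hv.mem i)
  have span_eq_span : span ℝ (Set.range v) = span ℝ (Set.range b) :=
    Submodule.eq_of_le_of_finrank_eq span_le_span <| by
      rw [finrank_span_eq_card hb, finrank_span_eq_card hv.linearIndependent]
  refine gramDet_le_of_mem_span_int hb fun i => hv.mem_span_int _ ?_ ?_
  · exact hbΛ ▸ subset_span (Set.mem_range_self i)
  · exact span_eq_span ▸ subset_span (Set.mem_range_self i)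

theorem prod_sqDist_cons_sub_zsmul_le {K : Submodule ℝ E} {y : E} {w : Fin n → E} {m : Fin n → ℤ}
    (hm : ∀ i, sqDist K (w i - m i • y) ≤ 4 / 3 * sqDist (span ℝ {y} ⊔ K) (w i)) :
    ∏ i, sqDist K ((Fin.cons y fun i => w i - m i • y : Fin (n + 1) → E) i) ≤
      (4 / 3) ^ n * ((∏ i, sqDist (span ℝ {y} ⊔ K) (w i)) * sqDist K y) := by
  have prod_le : ∏ i, sqDist K (w i - m i • y) ≤ ∏ i, 4 / 3 * sqDist (span ℝ {y} ⊔ K) (w i) :=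
    Finset.prod_le_prod (fun i _ => sqDist_nonneg K _) fun i _ => hm i
  rw [Finset.prod_mul_distrib, Finset.prod_const, Finset.card_fin] at prod_le
  simp only [Fin.prod_univ_succ, Fin.cons_zero, Fin.cons_succ]
  rw [mul_comm, ← mul_assoc]
  exact mul_le_mul_of_nonneg_right prod_le (sqDist_nonneg K y)

theorem IsPrimitiveSystem.exists_reduced {r : ℕ} {b : Fin r → E} (hΛ : IsIntegralOn (innerₗ E) Λ)
    (hb : LinearIndependent ℝ b) (hbΛ : span ℤ (Set.range b) = Λ) {v : Fin k → E}
    (hv : IsPrimitiveSystem Λ v) (hr : k + n = r) :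
    ∃ w : Fin n → E, (∀ i, w i ∈ Λ) ∧ LinearIndependent ℝ ((span ℝ (Set.range v)).mkQ ∘ w) ∧
      (∏ i, sqDist (span ℝ (Set.range v)) (w i)) * gramDet v ≤
        (4 / 3) ^ n.choose 2 * gramDet b := by
  induction n generalizing k with
  | zero =>
    obtain rfl : k = r := hr
    exact ⟨Fin.elim0, fun i => i.elim0, linearIndependent_empty_type,
      by simpa using hv.gramDet_le hb hbΛ⟩
  | succ n ih =>
    set K := span ℝ (Set.range v)
    obtain ⟨y, hy, hyK, hmin⟩ := exists_isMinOn_sqDist hΛ hv.linearIndependent hv.mem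
      (exists_mem_notMem_span_range hb (fun i => hbΛ ▸ subset_span (Set.mem_range_self i)) v
        (by omega))
    obtain ⟨w, hwΛ, hw, hprod⟩ := ih (hv.cons hy hyK hmin) (by omega)
    have span_cons : span ℝ (Set.range (Fin.cons y v : Fin (k + 1) → E)) = span ℝ {y} ⊔ K := by
      rw [Fin.range_cons, span_insert]
    have w_notMem (i : Fin n) : w i ∉ span ℝ {y} ⊔ K := fun h =>
      hw.ne_zero i ((Submodule.Quotient.mk_eq_zero _).2 (span_cons ▸ h))
    choose m hm using fun i =>
      exists_int_sqDist_sub_zsmul_le_mul hy hmin (hwΛ i) (w_notMem i)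
    refine ⟨Fin.cons y fun i => w i - m i • y,
      Fin.forall_fin_succ.2 ⟨hy, fun i => Λ.sub_mem (hwΛ i) (Λ.smul_mem _ hy)⟩, ?_, ?_⟩
    · simp only [← Int.cast_smul_eq_zsmul ℝ]
      exact linearIndependent_mkQ_comp_cons_sub_smul hyK (span_cons ▸ hw) _
    · simp only [span_cons, gramDet_cons] at hprod
      calc (∏ i, sqDist K ((Fin.cons y fun i => w i - m i • y : Fin (n + 1) → E) i)) * gramDet v
          ≤ (4 / 3) ^ n * ((∏ i, sqDist (span ℝ {y} ⊔ K) (w i)) * sqDist K y) * gramDet v :=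
            mul_le_mul_of_nonneg_right (prod_sqDist_cons_sub_zsmul_le hm) (gramDet_nonneg v)
        _ = (4 / 3) ^ n *
              ((∏ i, sqDist (span ℝ {y} ⊔ K) (w i)) * (sqDist K y * gramDet v)) := by ring
        _ ≤ (4 / 3) ^ n * ((4 / 3) ^ n.choose 2 * gramDet b) := by gcongr
        _ = (4 / 3) ^ (n + 1).choose 2 * gramDet b := by
            rw [Nat.choose_succ_succ' n 1, Nat.choose_one_right, pow_add, mul_assoc]

theorem exists_prod_norm_sq_le {b : Fin n → E} (hb : LinearIndependent ℝ b)
    (hint : IsIntegralOn (innerₗ E) (span ℤ (Set.range b))) :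
    ∃ x : Fin n → E, (∀ i, x i ∈ span ℤ (Set.range b)) ∧ LinearIndependent ℝ x ∧
      ∏ i, ‖x i‖ ^ 2 ≤ (4 / 3) ^ n.choose 2 * gramDet b := by
  have empty_isPrimitiveSystem :
      IsPrimitiveSystem (span ℤ (Set.range b)) (Fin.elim0 : Fin 0 → E) :=
    ⟨linearIndependent_empty_type, fun i => i.elim0, fun x _ hx => by simpa using hx⟩
  obtain ⟨x, hxb, hx, hprod⟩ := empty_isPrimitiveSystem.exists_reduced hint hb rfl n.zero_add
  refine ⟨x, hxb, hx.of_comp _, ?_⟩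
  simpa [sqDist_bot, gramDet] using hprod

end Reduction

section KernelOfFunctional

theorem exists_basis_forall_succ_eq_zero {R M : Type*} [CommRing R] [IsDomain R]
    [IsPrincipalIdealRing R] [AddCommGroup M] [Module R M] [Module.Free R M] [Module.Finite R M]
    {k : ℕ} (hM : finrank R M = k + 1) {φ : M →ₗ[R] R} (hφ : φ ≠ 0) :
    ∃ b : Basis (Fin (k + 1)) R M, φ (b 0) ≠ 0 ∧ ∀ i : Fin k, φ (b i.succ) = 0 := by
  obtain ⟨g, hg⟩ := (IsPrincipalIdealRing.principal (LinearMap.range φ)).principal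
  obtain ⟨c, hc⟩ : g ∈ LinearMap.range φ := hg ▸ mem_span_singleton_self g
  have g_ne_zero : g ≠ 0 := by
    rintro rfl
    rw [span_zero_singleton, LinearMap.range_eq_bot] at hg
    exact hφ hg
  have finrank_range : finrank R (LinearMap.range φ) = 1 := by
    rw [hg]
    rw [← (LinearEquiv.toSpanNonzeroSingleton R R g g_ne_zero).finrank_eq, finrank_self]
  have finrank_ker : finrank R (LinearMap.ker φ) = k := by
    have rank_nullity := finrank_quotient_add_finrank (LinearMap.ker φ)
    rw [φ.quotKerEquivRange.finrank_eq, finrank_range] at rank_nullity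
    omega
  refine ⟨Basis.mkFinCons c (finBasisOfFinrankEq R _ finrank_ker) ?_ ?_, ?_, fun i => ?_⟩
  · intro a x hx hax
    have a_mul_g : a * g = 0 := by simpa [hc, LinearMap.mem_ker.1 hx] using congrArg φ hax
    exact (mul_eq_zero.1 a_mul_g).resolve_right g_ne_zero
  · intro z
    obtain ⟨a, ha⟩ := mem_span_singleton.1 (hg ▸ LinearMap.mem_range_self φ z)
    exact ⟨-a, by simp [← ha, hc]⟩
  · simpa [hc] using g_ne_zero
  · simp

theorem exists_span_int_range_eq_forall_succ_eq_zero {E : Type*} [AddCommGroup E]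
    [Module ℝ E] {k : ℕ} {v : Fin (k + 1) → E} {l : E →ₗ[ℝ] ℝ}
    (hl : ∀ i, ∃ n : ℤ, l (v i) = n) (hne : ∃ i, l (v i) ≠ 0) :
    ∃ x : Fin (k + 1) → E, span ℤ (Set.range x) = span ℤ (Set.range v) ∧
      (∃ n : ℤ, n ≠ 0 ∧ l (x 0) = n) ∧ ∀ i : Fin k, l (x i.succ) = 0 := by
  choose a ha using hl
  have comb_apply (c : Fin (k + 1) → ℤ) :
      l (Fintype.linearCombination ℤ v c) = Fintype.linearCombination ℤ a c := by
    simp [Fintype.linearCombination_apply, ha]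
  have comb_ne_zero : Fintype.linearCombination ℤ a ≠ 0 := by
    obtain ⟨i, hi⟩ := hne
    intro h
    have zero_eq := Fintype.linearCombination_apply_single ℤ a i 1
    rw [h, LinearMap.zero_apply, one_smul] at zero_eq
    exact hi (by rw [ha, ← zero_eq, Int.cast_zero])
  obtain ⟨b, hb₀, hb⟩ := exists_basis_forall_succ_eq_zero (finrank_fin_fun ℤ) comb_ne_zero
  refine ⟨Fintype.linearCombination ℤ v ∘ b, ?_, ⟨_, hb₀, comb_apply _⟩, fun i => ?_⟩
  · rw [Set.range_comp, span_image, b.span_eq, Submodule.map_top, Fintype.range_linearCombination]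
  · rw [Function.comp_apply, comb_apply, hb, Int.cast_zero]

variable {E : Type*} [NormedAddCommGroup E] [InnerProductSpace ℝ E] {k : ℕ}

theorem one_le_sq_mul_sqDist {K : Submodule ℝ E} [K.HasOrthogonalProjection]
    {l : E →ₗ[ℝ] ℝ} (hK : K ≤ LinearMap.ker l)
    {M : ℝ} (hM : ∀ p, |l p| ≤ M * ‖p‖) {x : E} {n : ℤ} (hn : n ≠ 0) (hx : l x = n) :
    1 ≤ M ^ 2 * sqDist K x := by
  have apply_proj : l (Kᗮ.starProjection x) = l x := by
    rw [starProjection_orthogonal_val, map_sub,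
      LinearMap.mem_ker.1 (hK (K.starProjection_apply_mem x)), sub_zero]
  have one_le : 1 ≤ |l x| := by
    rw [hx]
    exact_mod_cast Int.one_le_abs hn
  rw [sqDist, ← mul_pow]
  exact one_le_pow₀ (one_le.trans (apply_proj ▸ hM _))

theorem exists_gramDet_le_mul_of_linear_eq_zero [FiniteDimensional ℝ E] {v : Fin (k + 1) → E}
    (hv : LinearIndependent ℝ v) {l : E →ₗ[ℝ] ℝ} (hl : ∀ i, ∃ n : ℤ, l (v i) = n)
    (hne : ∃ i, l (v i) ≠ 0) {M : ℝ} (hM : ∀ p, |l p| ≤ M * ‖p‖) :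
    ∃ x : Fin k → E, (∀ i, x i ∈ span ℤ (Set.range v)) ∧ LinearIndependent ℝ x ∧
      (∀ i, l (x i) = 0) ∧ gramDet x ≤ M ^ 2 * gramDet v := by
  obtain ⟨x, hspan, ⟨n, hn, hx₀⟩, hx⟩ := exists_span_int_range_eq_forall_succ_eq_zero hl hne
  have x_linearIndependent : LinearIndependent ℝ x := by
    refine linearIndependent_of_span_range_eq hv ?_
    rw [← span_span_of_tower ℤ ℝ, hspan, span_span_of_tower]
  have gramDet_le : gramDet x ≤ gramDet v :=
    gramDet_le_of_mem_span_int hv fun i => hspan ▸ subset_span (Set.mem_range_self i)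
  have tail_le_ker : span ℝ (Set.range (Fin.tail x)) ≤ LinearMap.ker l :=
    span_le.2 (Set.range_subset_iff.2 hx)
  refine ⟨Fin.tail x, fun i => hspan ▸ subset_span (Set.mem_range_self i.succ),
    x_linearIndependent.comp _ (Fin.succ_injective k), hx, ?_⟩
  rw [← Fin.cons_self_tail x, gramDet_cons] at gramDet_le
  calc gramDet (Fin.tail x)
      ≤ M ^ 2 * sqDist (span ℝ (Set.range (Fin.tail x))) (x 0) * gramDet (Fin.tail x) :=
        le_mul_of_one_le_left (gramDet_nonneg _) (one_le_sq_mul_sqDist tail_le_ker hM hn hx₀)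
    _ ≤ M ^ 2 * gramDet v := by
        rw [mul_assoc]
        gcongr

end KernelOfFunctional

section TotallyIsotropic

variable {𝕜 V : Type*} [Field 𝕜] [AddCommGroup V] [Module 𝕜 V] {B : BilinForm 𝕜 V}

/-- The subspace `W` is totally isotropic for `B`: the quadratic form `p ↦ B p p` vanishes
identically on `W`. -/
def IsTotallyIsotropic (B : BilinForm 𝕜 V) (W : Submodule 𝕜 V) : Prop :=
  ∀ p ∈ W, B p p = 0

theorem apply_add_sub (hB : B.IsSymm) (p q : V) : B (p + q) (p - q) = B p p - B q q := by
  rw [BilinForm.add_left, BilinForm.sub_right, BilinForm.sub_right, hB.eq q p]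
  ring

theorem IsTotallyIsotropic.mono {W W' : Submodule 𝕜 V} (hW : IsTotallyIsotropic B W)
    (hle : W' ≤ W) : IsTotallyIsotropic B W' :=
  fun p hp => hW p (hle hp)

theorem IsTotallyIsotropic.apply_eq_zero [NeZero (2 : 𝕜)] (hB : B.IsSymm) {W : Submodule 𝕜 V}
    (hW : IsTotallyIsotropic B W) {p q : V} (hp : p ∈ W) (hq : q ∈ W) : B p q = 0 := by
  have polarization : 2 * B p q = B (p + q) (p + q) - B p p - B q q := by
    rw [BilinForm.add_left, BilinForm.add_right, BilinForm.add_right, hB.eq q p]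
    ring
  rw [hW _ (add_mem hp hq), hW p hp, hW q hq, sub_zero, sub_zero] at polarization
  exact (mul_eq_zero.1 polarization).resolve_left two_ne_zero

theorem isTotallyIsotropic_span_range_iff [NeZero (2 : 𝕜)] (hB : B.IsSymm) {ι : Type*}
    {x : ι → V} :
    IsTotallyIsotropic B (span 𝕜 (Set.range x)) ↔ ∀ i j, B (x i) (x j) = 0 := by
  refine ⟨fun h i j => h.apply_eq_zero hB (subset_span (Set.mem_range_self i))
    (subset_span (Set.mem_range_self j)), fun h p hp => ?_⟩
  obtain ⟨c, rfl⟩ := Finsupp.mem_span_range_iff_exists_finsupp.1 hp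
  simp [Finsupp.sum, h]

end TotallyIsotropic

section Cofactor

variable {E : Type*} [NormedAddCommGroup E] [InnerProductSpace ℝ E] {B : BilinForm ℝ E}
  {K : Submodule ℝ E} [K.HasOrthogonalProjection] {y : E}

/-- On `span ℝ {y} ⊔ K` with `K` totally isotropic, the quadratic form of `B` factors as the
coordinate of `y` times a linear form; this is an extension of that linear form to the whole space.
The factorization is `B p p = B (p + π p) (p - π p)` with `π` the orthogonal projection onto `K`. -/
noncomputable def cofactor (B : BilinForm ℝ E) (K : Submodule ℝ E) [K.HasOrthogonalProjection]
    (y : E) : E →ₗ[ℝ] ℝ :=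
  B.flip (Kᗮ.starProjection y) ∘ₗ (LinearMap.id + K.starProjection.toLinearMap)

theorem cofactor_apply (p : E) :
    cofactor B K y p = B (p + K.starProjection p) (Kᗮ.starProjection y) := rfl

theorem apply_self_eq_mul_cofactor (hB : B.IsSymm) (hK : IsTotallyIsotropic B K) (s : ℝ) {u : E}
    (hu : u ∈ K) : B (s • y + u) (s • y + u) = s * cofactor B K y (s • y + u) := by
  set p := s • y + u with hp
  have sub_proj : p - K.starProjection p = s • Kᗮ.starProjection y := by
    rw [← starProjection_orthogonal_val, hp, map_add, map_smul,
      starProjection_orthogonal_apply_eq_zero hu, add_zero]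
  calc B p p = B (p + K.starProjection p) (p - K.starProjection p) := by
        rw [apply_add_sub hB, hK _ (K.starProjection_apply_mem p), sub_zero]
    _ = s * cofactor B K y p := by rw [sub_proj, map_smul, smul_eq_mul, cofactor_apply]

theorem cofactor_apply_self (hB : B.IsSymm) (hK : IsTotallyIsotropic B K) :
    cofactor B K y y = B y y := by
  simpa using (apply_self_eq_mul_cofactor (y := y) hB hK 1 K.zero_mem).symm

theorem cofactor_apply_of_mem (hB : B.IsSymm) (hK : IsTotallyIsotropic B K) {u : E} (hu : u ∈ K) :
    cofactor B K y u = 2 * B u y := by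
  rw [cofactor_apply, starProjection_eq_self_iff.2 hu, starProjection_orthogonal_val, map_sub,
    hK.apply_eq_zero hB (add_mem hu hu) (K.starProjection_apply_mem y), sub_zero, map_add,
    LinearMap.add_apply, two_mul]

theorem abs_cofactor_le {M : ℝ} (hM : ∀ p q, |B p q| ≤ M * ‖p‖ * ‖q‖) (hM0 : 0 ≤ M) (p : E) :
    |cofactor B K y p| ≤ 2 * M * ‖Kᗮ.starProjection y‖ * ‖p‖ := by
  have norm_add_le : ‖p + K.starProjection p‖ ≤ 2 * ‖p‖ := by
    linarith [norm_add_le p (K.starProjection p), K.norm_starProjection_apply_le p]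
  calc |cofactor B K y p| ≤ M * ‖p + K.starProjection p‖ * ‖Kᗮ.starProjection y‖ := hM _ _
    _ ≤ M * (2 * ‖p‖) * ‖Kᗮ.starProjection y‖ := by gcongr
    _ = 2 * M * ‖Kᗮ.starProjection y‖ * ‖p‖ := by ring

theorem isTotallyIsotropic_inf_ker_cofactor (hB : B.IsSymm) (hK : IsTotallyIsotropic B K) :
    IsTotallyIsotropic B ((span ℝ {y} ⊔ K) ⊓ LinearMap.ker (cofactor B K y)) := by
  rintro p ⟨hp, hpl⟩
  obtain ⟨a, ha, u, hu, rfl⟩ := mem_sup.1 hp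
  obtain ⟨s, rfl⟩ := mem_span_singleton.1 ha
  rw [apply_self_eq_mul_cofactor hB hK s hu, LinearMap.mem_ker.1 hpl, mul_zero]

end Cofactor

section MinimalIsotropicSystem

variable {E : Type*} [NormedAddCommGroup E] [InnerProductSpace ℝ E]
  {Λ : Submodule ℤ E} {B : BilinForm ℝ E} {L : ℕ} {Y : Fin L → E}

/-- The families of `L` linearly independent points of `Λ` whose real span is totally isotropic. -/
def isotropicSystems (Λ : Submodule ℤ E) (B : BilinForm ℝ E) (L : ℕ) : Set (Fin L → E) :=
  {x | LinearIndependent ℝ x ∧ (∀ i, x i ∈ Λ) ∧ IsTotallyIsotropic B (span ℝ (Set.range x))}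

theorem isPrimitiveSystem_of_isMinOn_isotropicSystems (hY : Y ∈ isotropicSystems Λ B L)
    (hmin : IsMinOn gramDet (isotropicSystems Λ B L) Y) : IsPrimitiveSystem Λ Y := by
  obtain ⟨hYli, hYΛ, hYB⟩ := hY
  refine isPrimitiveSystem_of_forall_gramDet_le hYli hYΛ fun w hw hwΛ hwY => ?_
  exact isMinOn_iff.1 hmin w ⟨hw, hwΛ, hYB.mono (span_le.2 (Set.range_subset_iff.2 hwY))⟩

theorem one_le_sq_mul_sqDist_of_isMinOn [FiniteDimensional ℝ E]
    (hY : Y ∈ isotropicSystems Λ B L) (hmin : IsMinOn gramDet (isotropicSystems Λ B L) Y)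
    {y : E} (hy : y ∈ Λ) (hyY : y ∉ span ℝ (Set.range Y)) {l : E →ₗ[ℝ] ℝ}
    (hl : ∀ i, ∃ n : ℤ, l ((Fin.cons y Y : Fin (L + 1) → E) i) = n)
    (hne : ∃ i, l ((Fin.cons y Y : Fin (L + 1) → E) i) ≠ 0)
    {M : ℝ} (hM : ∀ p, |l p| ≤ M * ‖p‖)
    (hiso : IsTotallyIsotropic B ((span ℝ {y} ⊔ span ℝ (Set.range Y)) ⊓ LinearMap.ker l)) :
    1 ≤ M ^ 2 * sqDist (span ℝ (Set.range Y)) y := by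
  obtain ⟨hYli, hYΛ, -⟩ := hY
  obtain ⟨x, hxspan, hxli, hxl, hxgd⟩ := exists_gramDet_le_mul_of_linear_eq_zero
    (linearIndependent_finCons.2 ⟨hYli, hyY⟩) hl hne hM
  have x_mem (i) : x i ∈ Λ :=
    span_le.2 (Set.range_subset_iff.2 (Fin.forall_fin_succ.2 ⟨hy, hYΛ⟩)) (hxspan i)
  have span_x_le : span ℝ (Set.range x) ≤
      (span ℝ {y} ⊔ span ℝ (Set.range Y)) ⊓ LinearMap.ker l := by
    refine span_le.2 (Set.range_subset_iff.2 fun i => ⟨?_, hxl i⟩)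
    rw [← span_insert, ← Fin.range_cons]
    exact span_le_restrictScalars ℤ ℝ _ (hxspan i)
  have gramDet_le := (isMinOn_iff.1 hmin x ⟨hxli, x_mem, hiso.mono span_x_le⟩).trans hxgd
  rw [gramDet_cons, ← mul_assoc] at gramDet_le
  exact le_of_mul_le_mul_right (by rwa [one_mul]) (gramDet_pos hYli)

end MinimalIsotropicSystem

section IntegerVectors

/-- The embedding of `ℤ^ι` as the lattice of integer points of Euclidean space. -/
def intVec (ι : Type*) : (ι → ℤ) →ₗ[ℤ] EuclideanSpace ℝ ι :=
  (WithLp.linearEquiv 2 ℝ (ι → ℝ)).symm.toLinearMap.restrictScalars ℤ ∘ₗ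
    (Algebra.linearMap ℤ ℝ).compLeft ι

theorem intVec_apply {ι : Type*} (x : ι → ℤ) (i : ι) : intVec ι x i = x i := rfl

variable {ι : Type*} [Fintype ι] {Λ : Submodule ℤ (EuclideanSpace ℝ ι)}
  {B : BilinForm ℝ (EuclideanSpace ℝ ι)} {L : ℕ} {Y : Fin L → EuclideanSpace ℝ ι}

theorem inner_intVec (x y : ι → ℤ) :
    inner ℝ (intVec ι x) (intVec ι y) = (x ⬝ᵥ y : ℤ) := by
  simp [PiLp.inner_apply, intVec_apply, dotProduct, mul_comm]

theorem isIntegralOn_innerₗ_of_le_range_intVec (hΛ : Λ ≤ LinearMap.range (intVec ι)) :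
    IsIntegralOn (innerₗ (EuclideanSpace ℝ ι)) Λ := by
  intro p hp q hq
  obtain ⟨⟨x, rfl⟩, ⟨y, rfl⟩⟩ := And.intro (hΛ hp) (hΛ hq)
  exact ⟨x ⬝ᵥ y, inner_intVec x y⟩

theorem one_le_sqDist_of_isTotallyIsotropic_sup (hΛ : Λ ≤ LinearMap.range (intVec ι))
    (hY : Y ∈ isotropicSystems Λ B L) (hmin : IsMinOn gramDet (isotropicSystems Λ B L) Y)
    {y : EuclideanSpace ℝ ι} (hy : y ∈ Λ) (hyY : y ∉ span ℝ (Set.range Y))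
    (hiso : IsTotallyIsotropic B (span ℝ {y} ⊔ span ℝ (Set.range Y))) :
    1 ≤ sqDist (span ℝ (Set.range Y)) y := by
  obtain ⟨j, hj⟩ : ∃ j, y j ≠ 0 := by
    by_contra! h
    exact hyY ((PiLp.ext h : y = 0) ▸ zero_mem _)
  have coord_int : ∀ p ∈ Λ, ∃ n : ℤ, EuclideanSpace.projₗ j p = n := by
    intro p hp
    obtain ⟨x, rfl⟩ := hΛ hp
    exact ⟨x j, rfl⟩
  have one_le := one_le_sq_mul_sqDist_of_isMinOn (M := 1) (l := EuclideanSpace.projₗ j) hY hmin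
    hy hyY (Fin.forall_fin_succ.2 ⟨coord_int y hy, fun i => coord_int _ (hY.2.1 i)⟩)
    ⟨0, hj⟩ (fun p => by simpa using PiLp.norm_apply_le p j) (hiso.mono inf_le_left)
  simpa using one_le

theorem one_le_two_mul_mul_sqDist (hΛ : Λ ≤ LinearMap.range (intVec ι)) (hB : B.IsSymm)
    (hBΛ : IsIntegralOn B Λ) {M : ℝ} (hM : ∀ p q, |B p q| ≤ M * ‖p‖ * ‖q‖) (hM1 : 1 ≤ M)
    (hY : Y ∈ isotropicSystems Λ B L) (hmin : IsMinOn gramDet (isotropicSystems Λ B L) Y)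
    {y : EuclideanSpace ℝ ι} (hy : y ∈ Λ) (hyY : y ∉ span ℝ (Set.range Y)) :
    1 ≤ 2 * M * sqDist (span ℝ (Set.range Y)) y := by
  obtain ⟨-, hYΛ, hYB⟩ := id hY
  set K := span ℝ (Set.range Y)
  set l := cofactor B K y
  by_cases hl : ∃ i, l ((Fin.cons y Y : Fin (L + 1) → EuclideanSpace ℝ ι) i) ≠ 0
  · have l_int : ∀ i, ∃ n : ℤ, l ((Fin.cons y Y : Fin (L + 1) → EuclideanSpace ℝ ι) i) = n := by
      refine Fin.forall_fin_succ.2 ⟨?_, fun i => ?_⟩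
      · exact (cofactor_apply_self hB hYB).symm ▸ hBΛ y hy y hy
      · obtain ⟨n, hn⟩ := hBΛ _ (hYΛ i) y hy
        refine ⟨2 * n, ?_⟩
        rw [Fin.cons_succ, cofactor_apply_of_mem hB hYB (subset_span (Set.mem_range_self i)), hn]
        push_cast
        rfl
    have one_le_sq := one_le_sq_mul_sqDist_of_isMinOn hY hmin hy hyY l_int hl
      (abs_cofactor_le hM (by linarith)) (isTotallyIsotropic_inf_ker_cofactor hB hYB)
    have sq_eq : (2 * M * ‖Kᗮ.starProjection y‖) ^ 2 * sqDist K y = (2 * M * sqDist K y) ^ 2 := by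
      rw [sqDist]
      ring
    rw [sq_eq] at one_le_sq
    exact (one_le_sq_iff₀ (mul_nonneg (by linarith) (sqDist_nonneg K y))).1 one_le_sq
  · push Not at hl
    have le_ker : span ℝ {y} ⊔ K ≤ LinearMap.ker l := by
      rw [← span_insert, ← Fin.range_cons]
      exact span_le.2 (Set.range_subset_iff.2 hl)
    have isotropic : IsTotallyIsotropic B (span ℝ {y} ⊔ K) :=
      (isTotallyIsotropic_inf_ker_cofactor hB hYB).mono (le_inf le_rfl le_ker)
    nlinarith [one_le_sqDist_of_isTotallyIsotropic_sup hΛ hY hmin hy hyY isotropic]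

theorem gramDet_le_of_isMinOn (hΛ : Λ ≤ LinearMap.range (intVec ι)) (hB : B.IsSymm)
    (hBΛ : IsIntegralOn B Λ) {M : ℝ} (hM : ∀ p q, |B p q| ≤ M * ‖p‖ * ‖q‖) (hM1 : 1 ≤ M)
    (hY : Y ∈ isotropicSystems Λ B L) (hmin : IsMinOn gramDet (isotropicSystems Λ B L) Y)
    {r n : ℕ} {b : Fin r → EuclideanSpace ℝ ι} (hb : LinearIndependent ℝ b)
    (hbΛ : span ℤ (Set.range b) = Λ) (hr : L + n = r) :
    gramDet Y ≤ (2 * M) ^ n * ((4 / 3) ^ n.choose 2 * gramDet b) := by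
  have hprim := isPrimitiveSystem_of_isMinOn_isotropicSystems hY hmin
  obtain ⟨w, hwΛ, hw, hprod⟩ := hprim.exists_reduced
    (isIntegralOn_innerₗ_of_le_range_intVec hΛ) hb hbΛ hr
  set K := span ℝ (Set.range Y)
  have w_notMem (i : Fin n) : w i ∉ K := fun h =>
    hw.ne_zero i ((Submodule.Quotient.mk_eq_zero _).2 h)
  have one_le_prod : 1 ≤ ∏ i, 2 * M * sqDist K (w i) :=
    Finset.one_le_prod fun i _ =>
      one_le_two_mul_mul_sqDist hΛ hB hBΛ hM hM1 hY hmin (hwΛ i) (w_notMem i)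
  calc gramDet Y ≤ (∏ i, 2 * M * sqDist K (w i)) * gramDet Y :=
        le_mul_of_one_le_left (gramDet_nonneg Y) one_le_prod
    _ = (2 * M) ^ n * ((∏ i, sqDist K (w i)) * gramDet Y) := by
        rw [Finset.prod_mul_distrib, Finset.prod_const, Finset.card_fin, mul_assoc]
    _ ≤ (2 * M) ^ n * ((4 / 3) ^ n.choose 2 * gramDet b) := by gcongr

theorem exists_mem_isotropicSystems_prod_norm_sq_le (hΛ : Λ ≤ LinearMap.range (intVec ι))
    (hB : B.IsSymm) (hBΛ : IsIntegralOn B Λ) {M : ℝ} (hM : ∀ p q, |B p q| ≤ M * ‖p‖ * ‖q‖)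
    (hM1 : 1 ≤ M) (hne : (isotropicSystems Λ B L).Nonempty)
    {r n : ℕ} {b : Fin r → EuclideanSpace ℝ ι} (hb : LinearIndependent ℝ b)
    (hbΛ : span ℤ (Set.range b) = Λ) (hr : L + n = r) :
    ∃ x ∈ isotropicSystems Λ B L, ∏ i, ‖x i‖ ^ 2 ≤
      (4 / 3) ^ L.choose 2 * ((2 * M) ^ n * ((4 / 3) ^ n.choose 2 * gramDet b)) := by
  have inner_int := isIntegralOn_innerₗ_of_le_range_intVec hΛ
  obtain ⟨Y, hY, hmin⟩ := exists_isMinOn_gramDet inner_int (fun _ hv => hv.2.1) hne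
  obtain ⟨x, hxY, hx, hxprod⟩ := exists_prod_norm_sq_le hY.1
    (inner_int.mono (span_le.2 (Set.range_subset_iff.2 hY.2.1)))
  have span_x_le : span ℝ (Set.range x) ≤ span ℝ (Set.range Y) :=
    span_le.2 (Set.range_subset_iff.2 fun i => span_le_restrictScalars ℤ ℝ _ (hxY i))
  refine ⟨x, ⟨hx, fun i => span_le.2 (Set.range_subset_iff.2 hY.2.1) (hxY i),
    hY.2.2.mono span_x_le⟩, hxprod.trans ?_⟩
  gcongr
  exact gramDet_le_of_isMinOn hΛ hB hBΛ hM hM1 hY hmin hb hbΛ hr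

end IntegerVectors

section IntegerMatrices

theorem intVec_injective (ι : Type*) : Function.Injective (intVec ι) := fun x y h => by
  ext i
  exact Int.cast_injective (congrArg (fun p : EuclideanSpace ℝ ι => p i) h)

theorem linearIndependent_intVec_comp_iff {ι κ : Type*} [Finite ι] {x : κ → ι → ℤ} :
    LinearIndependent ℝ (intVec ι ∘ x) ↔ LinearIndependent ℤ x := by
  rw [← linearIndependent_algebraMap_comp_iff (S := ℝ)]
  exact LinearMap.linearIndependent_iff (WithLp.linearEquiv 2 ℝ (ι → ℝ)).symm.toLinearMap
    (LinearEquiv.ker _) (v := fun k => algebraMap ℤ ℝ ∘ x k)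

theorem intVec_mem_span_range_comp_iff {ι κ : Type*} {v : κ → ι → ℤ} {x : ι → ℤ} :
    intVec ι x ∈ span ℤ (Set.range (intVec ι ∘ v)) ↔ x ∈ span ℤ (Set.range v) := by
  rw [Set.range_comp, span_image, ← SetLike.mem_coe, map_coe,
    (intVec_injective ι).mem_set_image, SetLike.mem_coe]

theorem span_range_intVec_comp_le {ι κ : Type*} (v : κ → ι → ℤ) :
    span ℤ (Set.range (intVec ι ∘ v)) ≤ LinearMap.range (intVec ι) :=
  span_le.2 (Set.range_subset_iff.2 fun k => LinearMap.mem_range_self _ (v k))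

variable {ι : Type*} [Fintype ι] [DecidableEq ι]

theorem gramDet_intVec_comp_row (B : Matrix ι ι ℤ) :
    gramDet (intVec ι ∘ B.row) = (B.det : ℝ) ^ 2 := by
  have gram_eq : Matrix.gram ℝ (intVec ι ∘ B.row) = (B * B.transpose).map (Int.cast : ℤ → ℝ) := by
    ext i j
    exact inner_intVec (B i) (B j)
  rw [gramDet, gram_eq, ← Int.cast_det, Matrix.det_mul, Matrix.det_transpose, Int.cast_mul, sq]

theorem toBilin'_map_intCast {R : Type*} [CommRing R] (A : Matrix ι ι ℤ) (x y : ι → ℤ) :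
    Matrix.toBilin' (A.map (Int.cast : ℤ → R)) (fun i => x i) (fun i => y i) =
      (Matrix.toBilin' A x y : ℤ) := by
  simp [Matrix.toBilin'_apply]

/-- The bilinear form on Euclidean space with integer Gram matrix `A`. -/
noncomputable def euclideanForm (A : Matrix ι ι ℤ) : BilinForm ℝ (EuclideanSpace ℝ ι) :=
  (Matrix.toBilin' (A.map (Int.cast : ℤ → ℝ))).comp
    (WithLp.linearEquiv 2 ℝ (ι → ℝ)).toLinearMap (WithLp.linearEquiv 2 ℝ (ι → ℝ)).toLinearMap

theorem euclideanForm_apply (A : Matrix ι ι ℤ) (p q : EuclideanSpace ℝ ι) :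
    euclideanForm A p q = ∑ i, ∑ j, p i * A i j * q j :=
  Matrix.toBilin'_apply _ _ _

theorem euclideanForm_intVec (A : Matrix ι ι ℤ) (x y : ι → ℤ) :
    euclideanForm A (intVec ι x) (intVec ι y) = (Matrix.toBilin' A x y : ℤ) :=
  toBilin'_map_intCast A x y

theorem isIntegralOn_euclideanForm (A : Matrix ι ι ℤ) :
    IsIntegralOn (euclideanForm A) (LinearMap.range (intVec ι)) := by
  rintro - ⟨x, rfl⟩ - ⟨y, rfl⟩
  exact ⟨_, euclideanForm_intVec A x y⟩

theorem abs_euclideanForm_le {A : Matrix ι ι ℤ} {H : ℕ} (hA : ∀ i j, (A i j).natAbs ≤ H)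
    (p q : EuclideanSpace ℝ ι) :
    |euclideanForm A p q| ≤ (Fintype.card ι ^ 2 * H : ℝ) * ‖p‖ * ‖q‖ := by
  have term_le (i j : ι) : |p i * A i j * q j| ≤ ‖p‖ * H * ‖q‖ := by
    have entry_le : |(A i j : ℝ)| ≤ H := by
      rw [← Int.cast_abs, Int.abs_eq_natAbs]
      exact_mod_cast hA i j
    rw [abs_mul, abs_mul]
    gcongr
    · exact PiLp.norm_apply_le p i
    · exact PiLp.norm_apply_le q j
  calc |euclideanForm A p q| ≤ ∑ i, ∑ j, |p i * A i j * q j| := by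
        rw [euclideanForm_apply]
        exact (Finset.abs_sum_le_sum_abs _ _).trans
          (Finset.sum_le_sum fun i _ => Finset.abs_sum_le_sum_abs _ _)
    _ ≤ ∑ _i : ι, ∑ _j : ι, ‖p‖ * H * ‖q‖ :=
        Finset.sum_le_sum fun i _ => Finset.sum_le_sum fun j _ => term_le i j
    _ = (Fintype.card ι ^ 2 * H : ℝ) * ‖p‖ * ‖q‖ := by
        simp only [Finset.sum_const, Finset.card_univ, nsmul_eq_mul]
        ring

theorem isSymm_euclideanForm {A : Matrix ι ι ℤ} (hA : A.IsSymm) : (euclideanForm A).IsSymm :=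
  ⟨fun _ _ => (Matrix.isSymm_toBilin'_iff_isSymm.2 (hA.map _)).eq _ _⟩

end IntegerMatrices

section Schlickewei

variable {N L : ℕ} {f : Fin N → Fin N → ℤ} {B : Matrix (Fin N) (Fin N) ℤ}

theorem memLattice_iff_mem_span {x : Fin N → ℤ} :
    memLattice B x ↔ x ∈ span ℤ (Set.range B.row) := by
  rw [mem_span_range_iff_exists_fun]
  refine exists_congr fun c => ?_
  rw [funext_iff]
  refine forall_congr' fun j => ?_
  rw [eq_comm, Finset.sum_apply]
  simp

theorem vanishesOnSpan_iff (hf : (Matrix.of f).IsSymm) {x : Fin L → Fin N → ℤ} :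
    VanishesOnSpan f x ↔ ∀ i j, Matrix.toBilin' (Matrix.of f) (x i) (x j) = 0 := by
  set F : BilinForm ℚ (Fin N → ℚ) := Matrix.toBilin' ((Matrix.of f).map Int.cast)
  have vanishes_iff : VanishesOnSpan f x ↔
      IsTotallyIsotropic F (span ℚ (Set.range fun k j => (x k j : ℚ))) := by
    refine forall₂_congr fun w _ => ?_
    simp [F, Matrix.toBilin'_apply, mul_comm, mul_left_comm]
  rw [vanishes_iff,
    isTotallyIsotropic_span_range_iff (Matrix.isSymm_toBilin'_iff_isSymm.2 (hf.map _))]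
  simp only [F, toBilin'_map_intCast, Int.cast_eq_zero]

theorem intVec_comp_mem_isotropicSystems_iff (hf : (Matrix.of f).IsSymm) {x : Fin L → Fin N → ℤ} :
    intVec (Fin N) ∘ x ∈ isotropicSystems (span ℤ (Set.range (intVec (Fin N) ∘ B.row)))
        (euclideanForm (Matrix.of f)) L ↔
      LinearIndependent ℤ x ∧ (∀ k, memLattice B (x k)) ∧ VanishesOnSpan f x := by
  rw [vanishesOnSpan_iff hf, isotropicSystems, Set.mem_ofPred_eq,
    linearIndependent_intVec_comp_iff, isTotallyIsotropic_span_range_iff (isSymm_euclideanForm hf)]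
  simp only [Function.comp_apply, intVec_mem_span_range_comp_iff, memLattice_iff_mem_span,
    euclideanForm_intVec, Int.cast_eq_zero]

theorem supNorm_le_norm_intVec (x : Fin N → ℤ) : (supNorm x : ℝ) ≤ ‖intVec (Fin N) x‖ := by
  rw [← Nat.le_floor_iff (norm_nonneg _)]
  refine Finset.sup_le fun i _ => Nat.le_floor ?_
  rw [Nat.cast_natAbs, Int.cast_abs]
  exact PiLp.norm_apply_le (intVec (Fin N) x) i

theorem exists_sq_prod_supNorm_le (hf : (Matrix.of f).IsSymm) {H : ℕ}
    (hH : ∀ i j, (f i j).natAbs ≤ H) (hH1 : 1 ≤ N ^ 2 * H) (hB : B.det ≠ 0) (hLN : L ≤ N)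
    (hy : ∃ y : Fin L → Fin N → ℤ, LinearIndependent ℤ y ∧ (∀ k, memLattice B (y k)) ∧
      VanishesOnSpan f y) :
    ∃ x : Fin L → Fin N → ℤ, LinearIndependent ℤ x ∧ (∀ k, memLattice B (x k)) ∧
      VanishesOnSpan f x ∧ (∏ k, (supNorm (x k) : ℝ)) ^ 2 ≤
        (4 / 3) ^ L.choose 2 * ((2 * (N ^ 2 * H)) ^ (N - L) *
          ((4 / 3) ^ (N - L).choose 2 * (B.det : ℝ) ^ 2)) := by
  obtain ⟨y, hy⟩ := hy
  have le_range := span_range_intVec_comp_le B.row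
  have rows_linearIndependent : LinearIndependent ℝ (intVec (Fin N) ∘ B.row) :=
    linearIndependent_intVec_comp_iff.2 (Matrix.linearIndependent_rows_of_det_ne_zero hB)
  obtain ⟨p, hp, hprod⟩ := exists_mem_isotropicSystems_prod_norm_sq_le le_range
    (isSymm_euclideanForm hf) ((isIntegralOn_euclideanForm _).mono le_range)
    (abs_euclideanForm_le hH) (by rw [Fintype.card_fin]; exact_mod_cast hH1)
    ⟨_, (intVec_comp_mem_isotropicSystems_iff hf).2 hy⟩
    rows_linearIndependent rfl (Nat.add_sub_cancel' hLN)
  choose x hx using fun k => le_range (hp.2.1 k)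
  obtain rfl : intVec (Fin N) ∘ x = p := funext hx
  obtain ⟨hxli, hxB, hxf⟩ := (intVec_comp_mem_isotropicSystems_iff hf).1 hp
  refine ⟨x, hxli, hxB, hxf, ?_⟩
  rw [gramDet_intVec_comp_row, Fintype.card_fin] at hprod
  rw [← Finset.prod_pow]
  refine (Finset.prod_le_prod (fun k _ => by positivity) fun k _ => ?_).trans hprod
  gcongr
  exact supNorm_le_norm_intVec (x k)

/-- The constant `C_N` of the theorem, as produced by the proof. -/
noncomputable def schlickeweiConst (N : ℕ) : ℝ := (4 / 3) ^ N.choose 2 * √(2 * N ^ 2) ^ N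

theorem schlickeweiConst_pos (hN : 1 ≤ N) : 0 < schlickeweiConst N := by
  have : (0 : ℝ) < N := by exact_mod_cast hN
  unfold schlickeweiConst
  positivity

theorem sq_rpow_half_sub {H : ℝ} (hH : 0 ≤ H) (hLN : L ≤ N) :
    (H ^ (((N : ℝ) - L) / 2)) ^ 2 = H ^ (N - L) := by
  rw [← Real.rpow_natCast, ← Real.rpow_mul hH, ← Real.rpow_natCast, Nat.cast_sub hLN,
    Nat.cast_ofNat, div_mul_cancel₀ _ two_ne_zero]

theorem le_sq_schlickeweiConst_mul (hN : 1 ≤ N) (hLN : L ≤ N) {H : ℝ} (hH : 0 ≤ H) (D : ℝ) :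
    (4 / 3) ^ L.choose 2 * ((2 * (N ^ 2 * H)) ^ (N - L) * ((4 / 3) ^ (N - L).choose 2 * D ^ 2)) ≤
      (schlickeweiConst N * H ^ (((N : ℝ) - L) / 2) * |D|) ^ 2 := by
  have one_le_base : (1 : ℝ) ≤ 2 * N ^ 2 := by
    have : (1 : ℝ) ≤ N := by exact_mod_cast hN
    nlinarith
  have one_le_four_thirds : (1 : ℝ) ≤ 4 / 3 := by norm_num
  calc (4 / 3) ^ L.choose 2 * ((2 * (N ^ 2 * H)) ^ (N - L) * ((4 / 3) ^ (N - L).choose 2 * D ^ 2))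
      = (4 / 3) ^ L.choose 2 * (4 / 3) ^ (N - L).choose 2 * (2 * N ^ 2) ^ (N - L) * H ^ (N - L) *
          D ^ 2 := by
        rw [← mul_assoc 2, mul_pow _ H]
        ring
    _ ≤ (4 / 3) ^ N.choose 2 * (4 / 3) ^ N.choose 2 * (2 * N ^ 2) ^ N * H ^ (N - L) * D ^ 2 := by
        gcongr <;> first | exact one_le_four_thirds | exact one_le_base | exact Nat.sub_le N L
    _ = (schlickeweiConst N * H ^ (((N : ℝ) - L) / 2) * |D|) ^ 2 := by
        rw [mul_pow _ |D|, mul_pow (schlickeweiConst N), sq_rpow_half_sub hH hLN, sq_abs,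
          schlickeweiConst, mul_pow _ (√_ ^ N), pow_right_comm √_, Real.sq_sqrt (by positivity)]
        ring

theorem one_le_sup_natAbs (hf : f ≠ 0) :
    1 ≤ Finset.univ.sup fun p : Fin N × Fin N => (f p.1 p.2).natAbs := by
  obtain ⟨i, hi⟩ := Function.ne_iff.1 hf
  obtain ⟨j, hij⟩ := Function.ne_iff.1 hi
  exact (Int.natAbs_pos.2 hij).trans_le (Finset.le_sup (f := fun p : Fin N × Fin N =>
    (f p.1 p.2).natAbs) (Finset.mem_univ (i, j)))

end Schlickewei

/-- **Schlickewei.** For every `N ≥ 2` there is a constant `C_N` such that: if `F` is a nonzero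
integral quadratic form in `N` variables, `Λ ⊆ ℤ^N` a full-rank sublattice, and `Λ` contains `L`
linearly independent points on whose ℚ-span `F` vanishes identically, then there are `L` linearly
independent `x_1, …, x_L ∈ Λ` with `F` vanishing identically on their ℚ-span and
`|x_1| ⋯ |x_L| ≤ C_N · |F|^((N−L)/2) · det(Λ)`. -/
theorem schlickewei (N : ℕ) (hN : 2 ≤ N) :
    ∃ C : ℝ, 0 < C ∧
      ∀ (f : Fin N → Fin N → ℤ), (∀ i j, f i j = f j i) → f ≠ 0 →
      ∀ B : Matrix (Fin N) (Fin N) ℤ, B.det ≠ 0 →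
      ∀ L : ℕ, 1 ≤ L → L ≤ N →
      (∃ y : Fin L → (Fin N → ℤ), LinearIndependent ℤ y ∧ (∀ k, memLattice B (y k)) ∧
        VanishesOnSpan f y) →
      ∃ x : Fin L → (Fin N → ℤ), LinearIndependent ℤ x ∧ (∀ k, memLattice B (x k)) ∧
        VanishesOnSpan f x ∧
        (∏ k, (supNorm (x k) : ℝ)) ≤
          C * ((Finset.univ.sup fun p : Fin N × Fin N => (f p.1 p.2).natAbs : ℕ) : ℝ) ^
            (((N : ℝ) - L) / 2) * |(B.det : ℝ)| := by
  have one_le_N : 1 ≤ N := by omega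
  refine ⟨schlickeweiConst N, schlickeweiConst_pos one_le_N, ?_⟩
  intro f hf hf0 B hB L _ hLN hy
  set H := Finset.univ.sup fun p : Fin N × Fin N => (f p.1 p.2).natAbs
  have natAbs_le (i j) : (f i j).natAbs ≤ H :=
    Finset.le_sup (f := fun p : Fin N × Fin N => (f p.1 p.2).natAbs) (Finset.mem_univ (i, j))
  have one_le_mul : 1 ≤ N ^ 2 * H :=
    Nat.mul_pos (pow_pos one_le_N 2) (one_le_sup_natAbs hf0)
  obtain ⟨x, hx, hxB, hxf, hprod⟩ :=
    exists_sq_prod_supNorm_le (Matrix.IsSymm.ext fun i j => hf j i) natAbs_le one_le_mul hB hLN hy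
  refine ⟨x, hx, hxB, hxf, ?_⟩
  have C_pos := schlickeweiConst_pos one_le_N
  exact le_of_sq_le_sq
    (hprod.trans (le_sq_schlickeweiConst_mul one_le_N hLN H.cast_nonneg _)) (by positivity)
end

section
/- Let N ≥ 2 and let F be a quadratic form in N variables over ℚ such that the quadratic space (ℚ^N, F) is regular (the Gram matrix (f_{ij}) is nonsingular). There exists a constant C depending only on N such that for every isometry σ ∈ O(ℚ^N, F), either σ is the identity, or there exist an integer 1 ≤ l ≤ 2N − 1 and reflections τ_1, …, τ_l ∈ O(ℚ^N, F) such that σ = τ_1 ∘ ⋯ ∘ τ_l and H(τ_i) ≤ C · (H(F)^{N/3} · H(σ))^{5^{N−1}} for each 1 ≤ i ≤ l. -/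
/-- Projective (homogeneous) height of a rational vector: the sup-norm of a primitive integer
vector proportional to it. -/
noncomputable def projHeight {ι : Type*} [Fintype ι] (x : ι → ℚ) : ℕ :=
  sInf {m : ℕ | ∃ y : ι → ℤ,
    (∃ c : ℚ, c ≠ 0 ∧ ∀ i, (y i : ℚ) = c * x i) ∧
    Finset.univ.gcd y = 1 ∧ m = Finset.univ.sup fun i => (y i).natAbs}

/-- Height of an `N×N` rational matrix, viewed as a vector in `ℚ^(N²)`. -/
noncomputable def matHeight {N : ℕ} (A : Matrix (Fin N) (Fin N) ℚ) : ℕ :=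
  projHeight fun p : Fin N × Fin N => A p.1 p.2

/-- `S` is an isometry of the quadratic space `(ℚ^N, F)`, where `F` has Gram matrix `f`. -/
def IsIsometry (N : ℕ) (f : Fin N → Fin N → ℚ) (S : Matrix (Fin N) (Fin N) ℚ) : Prop :=
  IsUnit S.det ∧ ∀ x y : Fin N → ℚ,
    ∑ i, ∑ j, f i j * S.mulVec x i * S.mulVec y j = ∑ i, ∑ j, f i j * x i * y j

/-- A reflection of `(ℚ^N, F)`: an isometry whose fixed-point set has dimension `N − 1`. -/
def IsReflection (N : ℕ) (f : Fin N → Fin N → ℚ) (τ : Matrix (Fin N) (Fin N) ℚ) : Prop :=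
  IsIsometry N f τ ∧
    Module.finrank ℚ
      (LinearMap.ker (τ.mulVecLin - (LinearMap.id : (Fin N → ℚ) →ₗ[ℚ] (Fin N → ℚ)))) = N - 1

/-!
Let `P` be a nonzero multiple of an orthogonal projection, with integral entries, such that `σ` is
trivial on the kernel of `P`; initially `P = 1`. Some sum `e_i + e_j` of basis vectors has an
anisotropic image `z` under `P`. By the parallelogram law `σ z - z` or `σ z + z` is anisotropic, so
`σ z` is carried to `z` by one reflection, or to `-z` by one reflection and then to `z` by a second
one. The resulting isometry fixes `z`, so `P` may be replaced by a multiple of the projection onto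
the complement of `z` in its range. After `N - 1` such steps the range is at most a line, on which
the isometry is `±1`; hence `2 (N - 1) + 1` reflections suffice.

As for heights, the determinant of `σ` is `±1`, so the denominators of `σ` are controlled by its
projective height. Starting with `Q` of order `H(F)` and `D` of order `H(σ)`, one step replaces `Q`
by `Q ^ 3` and `D` by `Q ^ 2 * D ^ 3`, and uses reflections of height at most `Q * D ^ 2`.
-/

open Module

section Reflection

variable {𝕜 V : Type*} [Field 𝕜] [AddCommGroup V] [Module 𝕜 V]
  {B : LinearMap.BilinForm 𝕜 V} {v x y : V} {c : 𝕜}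

/-- The reflection `x ↦ x - 2 B(v, x) / B(v, v) • v` along `v` in the space with form `B`. It is a
reflection only if `v` is anisotropic: if `B v v = 0`, then division by zero makes it the
identity. -/
noncomputable def orthReflection (B : LinearMap.BilinForm 𝕜 V) (v : V) : End 𝕜 V :=
  preReflection v ((2 / B v v) • B v)

lemma orthReflection_apply (B : LinearMap.BilinForm 𝕜 V) (v x : V) :
    orthReflection B v x = x - (2 / B v v * B v x) • v := by
  simp [orthReflection, preReflection_apply]

lemma orthReflection_apply_self (hv : B v v ≠ 0) : orthReflection B v v = -v :=
  preReflection_apply_self (by simp [hv])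

lemma orthReflection_mul_self (hv : B v v ≠ 0) :
    orthReflection B v * orthReflection B v = 1 :=
  LinearMap.ext (involutive_preReflection (by simp [hv]))

lemma orthReflection_apply_of_form_eq_zero (h : B v x = 0) : orthReflection B v x = x := by
  simp [orthReflection_apply, h]

lemma orthReflection_smul_vector (hc : c ≠ 0) (B : LinearMap.BilinForm 𝕜 V) (v : V) :
    orthReflection B (c • v) = orthReflection B v := by
  ext x
  simp only [orthReflection_apply, map_smul, LinearMap.smul_apply, smul_eq_mul, smul_smul]
  congr 2
  field_simp

lemma orthReflection_smul_form (hc : c ≠ 0) (B : LinearMap.BilinForm 𝕜 V) (v : V) :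
    orthReflection (c • B) v = orthReflection B v := by
  ext x
  simp only [orthReflection_apply, LinearMap.smul_apply, smul_eq_mul]
  congr 2
  field_simp

lemma isOrthogonal_orthReflection (hB : B.IsSymm) (hv : B v v ≠ 0) :
    B.IsOrthogonal (orthReflection B v) := by
  intro x y
  simp only [orthReflection_apply, map_sub, map_smul, LinearMap.sub_apply, LinearMap.smul_apply,
    smul_eq_mul, hB.eq x v]
  field_simp
  ring

lemma orthReflection_sub_apply (hB : B.IsSymm) (hxy : B x x = B y y)
    (hv : B (x - y) (x - y) ≠ 0) : orthReflection B (x - y) x = y := by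
  have hnorm : B (x - y) (x - y) = 2 * B (x - y) x := by
    simp only [map_sub, LinearMap.sub_apply, hB.eq y x, ← hxy]
    ring
  have hcoeff : 2 / B (x - y) (x - y) * B (x - y) x = 1 := by
    rw [div_mul_eq_mul_div, ← hnorm, div_self hv]
  rw [orthReflection_apply, hcoeff, one_smul, sub_sub_cancel]

lemma form_sub_self_ne_zero_or_form_add_self_ne_zero [NeZero (2 : 𝕜)] (hxy : B x x = B y y)
    (hy : B y y ≠ 0) : B (x - y) (x - y) ≠ 0 ∨ B (x + y) (x + y) ≠ 0 := by
  by_contra! ⟨hsub, hadd⟩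
  have parallelogram : B (x - y) (x - y) + B (x + y) (x + y) = 2 * (2 * B y y) := by
    simp only [map_sub, map_add, LinearMap.sub_apply, LinearMap.add_apply, hxy]
    ring
  rw [hsub, hadd, add_zero] at parallelogram
  exact mul_ne_zero two_ne_zero (mul_ne_zero two_ne_zero hy) parallelogram.symm

lemma ker_orthReflection_sub_id [NeZero (2 : 𝕜)] (hv : B v v ≠ 0) :
    LinearMap.ker (orthReflection B v - LinearMap.id) = LinearMap.ker (B v) := by
  have hv0 : v ≠ 0 := by
    rintro rfl
    simp at hv
  ext x
  simp [orthReflection_apply, hv, hv0, two_ne_zero]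

lemma finrank_ker_orthReflection_sub_id [NeZero (2 : 𝕜)] [FiniteDimensional 𝕜 V]
    (hv : B v v ≠ 0) :
    finrank 𝕜 (LinearMap.ker (orthReflection B v - LinearMap.id)) + 1 = finrank 𝕜 V := by
  rw [ker_orthReflection_sub_id hv]
  refine Dual.finrank_ker_add_one_of_ne_zero (f := B v) fun h => hv ?_
  rw [h, LinearMap.zero_apply]

lemma exists_form_basis_add_basis_ne_zero [NeZero (2 : 𝕜)] {ι : Type*} (b : Basis ι 𝕜 V)
    (hB : B.IsSymm) (hB0 : B ≠ 0) : ∃ i j, B (b i + b j) (b i + b j) ≠ 0 := by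
  by_contra! h
  have hadd : ∀ i j, B (b i) (b i) + B (b j) (b j) + 2 * B (b i) (b j) = 0 := by
    intro i j
    have := h i j
    simp only [map_add, LinearMap.add_apply, hB.eq (b j) (b i)] at this
    linear_combination this
  have hdiag : ∀ i, B (b i) (b i) = 0 := by
    intro i
    have : (2 * 2) * B (b i) (b i) = 0 := by linear_combination hadd i i
    simpa [two_ne_zero] using this
  refine hB0 (LinearMap.BilinForm.ext_basis b fun i j => ?_)
  simpa [hdiag, two_ne_zero] using hadd i j

end Reflection

lemma det_mul_self_of_isOrthogonal {𝕜 V : Type*} [Field 𝕜] [AddCommGroup V] [Module 𝕜 V]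
    [FiniteDimensional 𝕜 V] {B : LinearMap.BilinForm 𝕜 V} {σ : End 𝕜 V} (hB : B.Nondegenerate)
    (hσ : B.IsOrthogonal σ) : LinearMap.det σ * LinearMap.det σ = 1 := by
  let b := finBasis 𝕜 V
  have hcomp : B.comp σ σ = B := LinearMap.ext₂ hσ
  have hdet := congrArg (fun C => (LinearMap.BilinForm.toMatrix b C).det) hcomp
  simp only [LinearMap.BilinForm.toMatrix_comp b b, Matrix.det_mul, Matrix.det_transpose,
    LinearMap.det_toMatrix] at hdet
  have hB0 := (LinearMap.BilinForm.nondegenerate_iff_det_ne_zero b).mp hB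
  exact mul_right_cancel₀ hB0 (by linear_combination hdet)

section ScaledOrthProj

variable {𝕜 V : Type*} [Field 𝕜] [AddCommGroup V] [Module 𝕜 V]
  {B : LinearMap.BilinForm 𝕜 V} {P σ : End 𝕜 V} {q : 𝕜} {x y z : V}

/-- `P` is `q` times an orthogonal projection for the form `B`. The factor `q` makes it possible to
clear denominators of the projection. -/
structure IsScaledOrthProj (B : LinearMap.BilinForm 𝕜 V) (P : End 𝕜 V) (q : 𝕜) : Prop where
  scale_ne_zero : q ≠ 0
  apply_apply : ∀ x, P (P x) = q • P x
  form_apply_left : ∀ x y, B (P x) y = B x (P y)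

/-- `q B(z, z)` times the orthogonal projection onto the complement of `z` in the range of `P`, if
`P` is `q` times an orthogonal projection and `z` is in its range. -/
def deflate (B : LinearMap.BilinForm 𝕜 V) (P : End 𝕜 V) (z : V) : End 𝕜 V :=
  B z z • P - (B z ∘ₗ P).smulRight z

lemma deflate_apply (B : LinearMap.BilinForm 𝕜 V) (P : End 𝕜 V) (z x : V) :
    deflate B P z x = B z z • P x - B z (P x) • z := rfl

namespace IsScaledOrthProj

protected lemma one (B : LinearMap.BilinForm 𝕜 V) : IsScaledOrthProj B 1 1 where
  scale_ne_zero := one_ne_zero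
  apply_apply x := by simp
  form_apply_left x y := rfl

lemma form_eq_zero (hP : IsScaledOrthProj B P q) (hx : P x = q • x) (hy : P y = 0) :
    B x y = 0 := by
  have : q * B x y = 0 := by
    rw [← smul_eq_mul, ← LinearMap.smul_apply, ← map_smul, ← hx, hP.form_apply_left, hy, map_zero]
  exact (mul_eq_zero.mp this).resolve_left hP.scale_ne_zero

lemma apply_smul_sub (hP : IsScaledOrthProj B P q) (x : V) : P (q • x - P x) = 0 := by
  rw [map_sub, map_smul, hP.apply_apply, sub_self]

lemma mem_range (hP : IsScaledOrthProj B P q) (hx : P x = q • x) : x ∈ LinearMap.range P :=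
  (Submodule.smul_mem_iff _ hP.scale_ne_zero).mp (hx ▸ LinearMap.mem_range_self P x)

lemma exists_anisotropic [NeZero (2 : 𝕜)] {ι : Type*} (b : Basis ι 𝕜 V) (hB : B.IsSymm)
    (hB' : B.Nondegenerate) (hP : IsScaledOrthProj B P q) (hP0 : P ≠ 0) :
    ∃ i j, B (P (b i + b j)) (P (b i + b j)) ≠ 0 := by
  have hsymm : (B.comp P P).IsSymm := ⟨fun x y => hB.eq (P x) (P y)⟩
  refine exists_form_basis_add_basis_ne_zero b hsymm fun h0 => hP0 (LinearMap.ext fun x => ?_)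
  refine hB'.1 (P x) fun y => ?_
  have : q * B (P x) y = 0 := by
    rw [← smul_eq_mul, ← LinearMap.smul_apply, ← map_smul, ← hP.apply_apply, hP.form_apply_left]
    exact LinearMap.congr_fun₂ h0 x y
  exact (mul_eq_zero.mp this).resolve_left hP.scale_ne_zero

/-- Since `σ` fixes the kernel of `P`, the vector `σ x - x` is orthogonal to it. -/
lemma apply_sub_of_isOrthogonal (hB : B.Nondegenerate) (hP : IsScaledOrthProj B P q)
    (hσ : B.IsOrthogonal σ) (hfix : ∀ k, P k = 0 → σ k = k) (x : V) :
    P (σ x - x) = q • (σ x - x) := by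
  refine (sub_eq_zero.mp (hB.1 _ fun y => ?_)).symm
  have hk : B (σ x) (q • y - P y) = B x (q • y - P y) := by
    rw [← hσ x, hfix _ (hP.apply_smul_sub y)]
  rw [map_sub, LinearMap.sub_apply, hP.form_apply_left, map_smul, LinearMap.smul_apply, ← map_smul,
    ← map_sub, LinearMap.map_sub₂, hk, sub_self]

lemma deflate (hB : B.IsSymm) (hP : IsScaledOrthProj B P q) (hz : P z = q • z) (hzz : B z z ≠ 0) :
    IsScaledOrthProj B (deflate B P z) (B z z * q) where
  scale_ne_zero := mul_ne_zero hzz hP.scale_ne_zero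
  apply_apply x := by
    simp only [deflate_apply, map_sub, map_smul, hP.apply_apply, hz, smul_eq_mul]
    module
  form_apply_left x y := by
    have hPz : ∀ y, B z (P y) = q * B z y := fun y => by
      rw [← hP.form_apply_left, hz, map_smul, LinearMap.smul_apply, smul_eq_mul]
    simp only [deflate_apply, map_sub, map_smul, LinearMap.sub_apply, LinearMap.smul_apply,
      smul_eq_mul, hP.form_apply_left, hPz, hB.eq x z]
    ring

end IsScaledOrthProj

lemma form_deflate_right (B : LinearMap.BilinForm 𝕜 V) (P : End 𝕜 V) (z x : V) :
    B z (deflate B P z x) = 0 := by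
  simp only [deflate_apply, map_sub, map_smul, smul_eq_mul]
  ring

lemma range_deflate_lt_range (hz : z ∈ LinearMap.range P) (hzz : B z z ≠ 0) :
    LinearMap.range (deflate B P z) < LinearMap.range P := by
  refine lt_of_le_of_ne ?_ fun h => ?_
  · rintro _ ⟨x, rfl⟩
    exact sub_mem (Submodule.smul_mem _ _ (LinearMap.mem_range_self P x))
      (Submodule.smul_mem _ _ hz)
  · obtain ⟨x, hx⟩ := h ▸ hz
    exact hzz (by simpa only [hx] using form_deflate_right B P z x)

lemma apply_eq_self_of_deflate_eq_zero (hP : IsScaledOrthProj B P q) (hz : P z = q • z)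
    (hzz : B z z ≠ 0) (hfix : ∀ k, P k = 0 → σ k = k) (hσz : σ z = z)
    (hx : deflate B P z x = 0) : σ x = x := by
  have hBx : B z z • P x = B z (P x) • z := sub_eq_zero.mp hx
  have hker : P ((B z z * q) • x - B z (P x) • z) = 0 := by
    rw [map_sub, map_smul, map_smul, hz, mul_comm, mul_smul, hBx, smul_comm, sub_self]
  have hσ := hfix _ hker
  rw [map_sub, map_smul, map_smul, hσz, sub_left_inj] at hσ
  exact smul_right_injective V (mul_ne_zero hzz hP.scale_ne_zero) hσ

lemma deflate_eq_zero_of_finrank_range_le_one [FiniteDimensional 𝕜 V]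
    (hrank : finrank 𝕜 (LinearMap.range P) ≤ 1) (hz : z ∈ LinearMap.range P) (hzz : B z z ≠ 0) :
    deflate B P z = 0 := by
  have hlt := Submodule.finrank_lt_finrank_of_lt (range_deflate_lt_range hz hzz)
  rw [← LinearMap.range_eq_bot, ← Submodule.finrank_eq_zero (R := 𝕜)]
  lia

lemma apply_eq_self_or_neg_of_deflate_eq_zero (hP : IsScaledOrthProj B P q)
    (hσ : B.IsOrthogonal σ) (hσz : P (σ z) = q • σ z) (hzz : B z z ≠ 0)
    (h : deflate B P z (σ z) = 0) : σ z = z ∨ σ z = -z := by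
  obtain ⟨t, ht⟩ : ∃ t : 𝕜, σ z = t • z := by
    have hline : (B z z * q) • σ z = B z (P (σ z)) • z := by
      rw [mul_smul, ← hσz]
      exact sub_eq_zero.mp h
    refine ⟨(B z z * q)⁻¹ * B z (P (σ z)), ?_⟩
    rw [mul_smul, ← hline, inv_smul_smul₀ (mul_ne_zero hzz hP.scale_ne_zero)]
  have htt : t * t = 1 := by
    have := hσ z z
    simp only [ht, map_smul, LinearMap.smul_apply, smul_eq_mul, ← mul_assoc] at this
    exact mul_eq_right₀ hzz |>.mp this
  rcases mul_self_eq_one_iff.mp htt with rfl | rfl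
  · exact .inl (by rw [ht, one_smul])
  · exact .inr (by rw [ht, neg_one_smul])

end ScaledOrthProj

section BoundedInt

variable {ι : Type*} {a b : ℕ} {s t : ℚ}

/-- The rational number `t` is an integer of absolute value at most `b`. All heights are estimated
through this predicate, after clearing denominators. -/
def IsBoundedInt (b : ℕ) (t : ℚ) : Prop := ∃ n : ℤ, (n : ℚ) = t ∧ n.natAbs ≤ b

namespace IsBoundedInt

lemma mono (h : IsBoundedInt a t) (hab : a ≤ b) : IsBoundedInt b t :=
  let ⟨n, hn, hna⟩ := h
  ⟨n, hn, hna.trans hab⟩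

protected lemma one : IsBoundedInt 1 1 := ⟨1, by simp⟩

protected lemma two : IsBoundedInt 2 2 := ⟨2, by simp⟩

lemma neg (h : IsBoundedInt a t) : IsBoundedInt a (-t) := by
  obtain ⟨n, rfl, hna⟩ := h
  exact ⟨-n, by push_cast; rfl, by rwa [Int.natAbs_neg]⟩

lemma add (hs : IsBoundedInt a s) (ht : IsBoundedInt b t) : IsBoundedInt (a + b) (s + t) := by
  obtain ⟨m, rfl, hma⟩ := hs
  obtain ⟨n, rfl, hnb⟩ := ht
  exact ⟨m + n, by push_cast; rfl, (Int.natAbs_add_le m n).trans (add_le_add hma hnb)⟩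

lemma sub (hs : IsBoundedInt a s) (ht : IsBoundedInt b t) : IsBoundedInt (a + b) (s - t) :=
  sub_eq_add_neg s t ▸ hs.add ht.neg

lemma mul (hs : IsBoundedInt a s) (ht : IsBoundedInt b t) : IsBoundedInt (a * b) (s * t) := by
  obtain ⟨m, rfl, hma⟩ := hs
  obtain ⟨n, rfl, hnb⟩ := ht
  exact ⟨m * n, by push_cast; rfl, (Int.natAbs_mul m n).trans_le (mul_le_mul' hma hnb)⟩

lemma sum [Fintype ι] {x : ι → ℚ} (hx : ∀ i, IsBoundedInt b (x i)) :
    IsBoundedInt (Fintype.card ι * b) (∑ i, x i) := by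
  choose n hn hnb using hx
  refine ⟨∑ i, n i, by simp [hn], (Int.natAbs_sum_le _ _).trans ?_⟩
  simpa using Finset.sum_le_card_nsmul Finset.univ (fun i => (n i).natAbs) b fun i _ => hnb i

lemma one_le (h : IsBoundedInt b t) (ht : t ≠ 0) : 1 ≤ b := by
  obtain ⟨n, rfl, hnb⟩ := h
  exact (Int.natAbs_pos.mpr (Int.cast_ne_zero.mp ht)).trans_le hnb

lemma pi_single [DecidableEq ι] (i j : ι) : IsBoundedInt 1 ((Pi.single j 1 : ι → ℚ) i) := by
  rcases eq_or_ne i j with rfl | hij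
  · simpa using IsBoundedInt.one
  · exact ⟨0, by simp [hij]⟩

lemma dual_apply [Fintype ι] [DecidableEq ι] {φ : Dual ℚ (ι → ℚ)} {x : ι → ℚ}
    (hφ : ∀ j, IsBoundedInt a (φ (Pi.single j 1))) (hx : ∀ j, IsBoundedInt b (x j)) :
    IsBoundedInt (Fintype.card ι * (a * b)) (φ x) := by
  have hsum : φ x = ∑ j, φ (Pi.single j 1) * x j := by
    conv_lhs => rw [pi_eq_sum_univ' x, map_sum]
    simp [mul_comm]
  exact hsum ▸ sum fun j => (hφ j).mul (hx j)

lemma end_apply [Fintype ι] [DecidableEq ι] {f : End ℚ (ι → ℚ)} {x : ι → ℚ}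
    (hf : ∀ i j, IsBoundedInt a (f (Pi.single j 1) i)) (hx : ∀ j, IsBoundedInt b (x j)) (i : ι) :
    IsBoundedInt (Fintype.card ι * (a * b)) (f x i) :=
  dual_apply (φ := LinearMap.proj i ∘ₗ f) (hf i) hx

lemma form_apply_single [Fintype ι] [DecidableEq ι] {B : LinearMap.BilinForm ℚ (ι → ℚ)} {x : ι → ℚ}
    (hB : ∀ i j, IsBoundedInt a (B (Pi.single i 1) (Pi.single j 1)))
    (hx : ∀ i, IsBoundedInt b (x i)) (j : ι) :
    IsBoundedInt (Fintype.card ι * (a * b)) (B x (Pi.single j 1)) :=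
  dual_apply (φ := B.flip (Pi.single j 1)) (hB · j) hx

lemma form_apply [Fintype ι] [DecidableEq ι] {B : LinearMap.BilinForm ℚ (ι → ℚ)} {x y : ι → ℚ}
    {H : ℕ}
    (hB : ∀ i j, IsBoundedInt H (B (Pi.single i 1) (Pi.single j 1)))
    (hx : ∀ i, IsBoundedInt a (x i)) (hy : ∀ i, IsBoundedInt b (y i)) :
    IsBoundedInt (Fintype.card ι ^ 2 * H * a * b) (B x y) :=
  (dual_apply (form_apply_single hB hx) hy).mono (by grind)

lemma det [Fintype ι] [DecidableEq ι] {M : Matrix ι ι ℚ} (hM : ∀ i j, IsBoundedInt b (M i j)) :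
    IsBoundedInt ((Fintype.card ι).factorial * b ^ Fintype.card ι) M.det := by
  choose n hn hnb using hM
  have hdet : ((Matrix.of n).det : ℚ) = M.det := by
    rw [Int.cast_det]
    congr 1
    ext i j
    exact hn i j
  refine ⟨_, hdet, ?_⟩
  have := Matrix.det_le (A := Matrix.of n) (abv := AbsoluteValue.abs) (x := (b : ℤ))
    fun i j => by
      simpa only [Matrix.of_apply, AbsoluteValue.abs_apply, Int.abs_eq_natAbs, Nat.cast_le] using
        hnb i j
  rw [AbsoluteValue.abs_apply, Int.abs_eq_natAbs, nsmul_eq_mul] at this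
  exact_mod_cast this

lemma of_pow {n c : ℕ} (hn : n ≠ 0) (h : IsBoundedInt (c * b ^ n) (t ^ n)) :
    IsBoundedInt (c * b) t := by
  obtain ⟨m, hm, hmb⟩ := h
  obtain ⟨k, rfl⟩ : ∃ k : ℤ, (k : ℚ) = t :=
    IsIntegrallyClosed.exists_algebraMap_eq_of_isIntegral_pow (R := ℤ)
      (Nat.pos_of_ne_zero hn) (hm ▸ isIntegral_algebraMap)
  obtain rfl : m = k ^ n := by exact_mod_cast hm
  refine ⟨k, rfl, le_of_pow_le_pow_left₀ (n := n) hn (Nat.zero_le _) ?_⟩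
  calc k.natAbs ^ n ≤ c * b ^ n := by rwa [← Int.natAbs_pow]
    _ ≤ c ^ n * b ^ n := by gcongr; exact Nat.le_self_pow hn c
    _ = (c * b) ^ n := (mul_pow c b n).symm

end IsBoundedInt

end BoundedInt

section Height

variable {ι : Type*} [Fintype ι] {x : ι → ℚ} {b : ℕ} {c : ℚ}

lemma projHeight_zero : projHeight (0 : ι → ℚ) = 0 := by
  refine Nat.sInf_eq_zero.mpr (.inr (Set.eq_empty_of_forall_notMem ?_))
  rintro m ⟨y, ⟨c, -, hy⟩, hgcd, -⟩
  have hy0 : y = 0 := funext fun i => by simpa using hy i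
  exact one_ne_zero (hgcd.symm.trans (Finset.gcd_eq_zero_iff.mpr fun i _ => congrFun hy0 i))

lemma exists_primitive_of_isBoundedInt (hx : x ≠ 0) (hc : c ≠ 0)
    (h : ∀ i, IsBoundedInt b (c * x i)) : ∃ y : ι → ℤ,
      (∃ c : ℚ, c ≠ 0 ∧ ∀ i, (y i : ℚ) = c * x i) ∧ Finset.univ.gcd y = 1 ∧
      ∀ i, (y i).natAbs ≤ b := by
  choose n hn hnb using h
  obtain ⟨i₀, hi₀⟩ := Function.ne_iff.mp hx
  obtain ⟨y, hy, hgcd⟩ := Finset.extract_gcd n (Finset.univ_nonempty_iff.mpr ⟨i₀⟩)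
  have hg : Finset.univ.gcd n ≠ 0 := fun hg => by
    have hni₀ : n i₀ = 0 := Finset.gcd_eq_zero_iff.mp hg i₀ (Finset.mem_univ i₀)
    have := hn i₀
    rw [hni₀, Int.cast_zero, zero_eq_mul] at this
    exact this.elim hc hi₀
  refine ⟨y, ⟨c / Finset.univ.gcd n, div_ne_zero hc (Int.cast_ne_zero.mpr hg), fun i => ?_⟩,
    hgcd, fun i => le_trans ?_ (hnb i)⟩
  · rw [div_mul_eq_mul_div, ← hn, eq_div_iff (Int.cast_ne_zero.mpr hg), mul_comm,
      hy i (Finset.mem_univ i), Int.cast_mul]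
  · rw [hy i (Finset.mem_univ i), Int.natAbs_mul]
    exact Nat.le_mul_of_pos_left _ (Int.natAbs_pos.mpr hg)

lemma projHeight_le (hc : c ≠ 0) (h : ∀ i, IsBoundedInt b (c * x i)) : projHeight x ≤ b := by
  rcases eq_or_ne x 0 with rfl | hx
  · simp [projHeight_zero]
  · obtain ⟨y, hy, hgcd, hyb⟩ := exists_primitive_of_isBoundedInt hx hc h
    calc
      projHeight x ≤ Finset.univ.sup fun i => (y i).natAbs := Nat.sInf_le ⟨y, hy, hgcd, rfl⟩
      _ ≤ b := Finset.sup_le fun i _ => hyb i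

lemma exists_isBoundedInt_mul {ι : Type*} [Finite ι] (x : ι → ℚ) :
    ∃ b : ℕ, ∃ c : ℚ, c ≠ 0 ∧ ∀ i, IsBoundedInt b (c * x i) := by
  cases nonempty_fintype ι
  obtain ⟨c, hc⟩ := IsLocalization.exist_integer_multiples_of_finite (nonZeroDivisors ℤ) x
  choose n hn using hc
  refine ⟨Finset.univ.sup fun i => (n i).natAbs, (c : ℤ),
    Int.cast_ne_zero.mpr (nonZeroDivisors.coe_ne_zero c), fun i => ⟨n i, ?_, ?_⟩⟩
  · simpa using hn i
  · exact Finset.le_sup (f := fun i => (n i).natAbs) (Finset.mem_univ i)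

lemma exists_isBoundedInt_projHeight_mul (hx : x ≠ 0) :
    ∃ c : ℚ, c ≠ 0 ∧ ∀ i, IsBoundedInt (projHeight x) (c * x i) := by
  obtain ⟨b, c, hc, hb⟩ := exists_isBoundedInt_mul x
  obtain ⟨y₀, hy₀, hgcd₀, -⟩ := exists_primitive_of_isBoundedInt hx hc hb
  have hne : {m : ℕ | ∃ y : ι → ℤ, (∃ c : ℚ, c ≠ 0 ∧ ∀ i, (y i : ℚ) = c * x i) ∧
      Finset.univ.gcd y = 1 ∧ m = Finset.univ.sup fun i => (y i).natAbs}.Nonempty :=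
    ⟨_, y₀, hy₀, hgcd₀, rfl⟩
  obtain ⟨y, ⟨c, hc, hy⟩, -, hsup⟩ := Nat.sInf_mem hne
  exact ⟨c, hc, fun i => ⟨y i, hy i,
    (Finset.le_sup (f := fun i => (y i).natAbs) (Finset.mem_univ i)).trans hsup.ge⟩⟩

lemma one_le_projHeight (hx : x ≠ 0) : 1 ≤ projHeight x := by
  obtain ⟨c, hc, h⟩ := exists_isBoundedInt_projHeight_mul hx
  obtain ⟨i, hi⟩ := Function.ne_iff.mp hx
  exact (h i).one_le (mul_ne_zero hc hi)

end Height

section AffineHeight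

variable {ι : Type*} [DecidableEq ι] {B : LinearMap.BilinForm ℚ (ι → ℚ)} {P σ τ : End ℚ (ι → ℚ)}
  {H a b p D : ℕ} {c : ℚ} {v z w : ι → ℚ}

/-- The inhomogeneous height of the matrix of `σ` is at most `D`: some common denominator of its
entries, and the entries multiplied by it, are integers of absolute value at most `D`. Unlike the
projective height, this bounds the denominators and is therefore submultiplicative up to a
constant. -/
def AffineHeightLE (D : ℕ) (σ : End ℚ (ι → ℚ)) : Prop :=
  ∃ d : ℚ, d ≠ 0 ∧ IsBoundedInt D d ∧ ∀ i j, IsBoundedInt D (d * σ (Pi.single j 1) i)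

namespace AffineHeightLE

lemma mono (h : AffineHeightLE a σ) (hab : a ≤ b) : AffineHeightLE b σ :=
  let ⟨d, hd, hda, hσ⟩ := h
  ⟨d, hd, hda.mono hab, fun i j => (hσ i j).mono hab⟩

lemma one_le (h : AffineHeightLE D σ) : 1 ≤ D :=
  let ⟨_, hd, hdD, _⟩ := h
  hdD.one_le hd

lemma matHeight_toMatrix'_le {N : ℕ} {σ : End ℚ (Fin N → ℚ)} (h : AffineHeightLE D σ) :
    matHeight (LinearMap.toMatrix' σ) ≤ D :=
  let ⟨_, hd, _, hσ⟩ := h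
  projHeight_le hd fun ij => hσ ij.1 ij.2

variable [Fintype ι]

lemma mul [Nonempty ι] (hσ : AffineHeightLE a σ) (hτ : AffineHeightLE b τ) :
    AffineHeightLE (Fintype.card ι * (a * b)) (σ * τ) := by
  obtain ⟨d, hd, hda, hσ⟩ := hσ
  obtain ⟨e, he, heb, hτ⟩ := hτ
  refine ⟨d * e, mul_ne_zero hd he,
    (hda.mul heb).mono (Nat.le_mul_of_pos_left _ Fintype.card_pos), fun i j => ?_⟩
  have happly := IsBoundedInt.end_apply (f := d • σ) hσ (x := e • τ (Pi.single j 1)) (hτ · j) i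
  simpa [mul_assoc, mul_left_comm] using happly

/-- `B(v, v)` is a common denominator. -/
protected lemma orthReflection (hB : ∀ i j, IsBoundedInt H (B (Pi.single i 1) (Pi.single j 1)))
    (hv : ∀ i, IsBoundedInt a (v i)) (hvv : B v v ≠ 0) :
    AffineHeightLE (3 * Fintype.card ι ^ 2 * H * a ^ 2) (orthReflection B v) := by
  have hcard : Fintype.card ι ≤ Fintype.card ι ^ 2 := Nat.le_self_pow two_ne_zero _
  refine ⟨B v v, hvv, (IsBoundedInt.form_apply hB hv hv).mono (by ring_nf; lia), fun i j => ?_⟩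
  have hentry : B v v * orthReflection B v (Pi.single j 1) i =
      B v v * (Pi.single j 1 : ι → ℚ) i - 2 * B v (Pi.single j 1) * v i := by
    rw [orthReflection_apply, Pi.sub_apply, Pi.smul_apply, smul_eq_mul]
    field_simp
  rw [hentry]
  refine (((IsBoundedInt.form_apply hB hv hv).mul (.pi_single i j)).sub
    ((IsBoundedInt.two.mul (.form_apply_single hB hv j)).mul (hv i))).mono ?_
  calc
    Fintype.card ι ^ 2 * H * a * a * 1 + 2 * (Fintype.card ι * (H * a)) * a =
        (Fintype.card ι ^ 2 + 2 * Fintype.card ι) * (H * a ^ 2) := by ring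
    _ ≤ (3 * Fintype.card ι ^ 2) * (H * a ^ 2) := by gcongr; lia
    _ = 3 * Fintype.card ι ^ 2 * H * a ^ 2 := by ring

lemma orthReflection_apply_sub [Nonempty ι]
    (hB : ∀ i j, IsBoundedInt H (B (Pi.single i 1) (Pi.single j 1)))
    (hσ : AffineHeightLE D σ) (hz : ∀ i, IsBoundedInt a (z i)) (hw : ∀ i, IsBoundedInt a (w i))
    (hzw : B (σ z - w) (σ z - w) ≠ 0) :
    AffineHeightLE (12 * Fintype.card ι ^ 4 * H * a ^ 2 * D ^ 2)
      (orthReflection B (σ z - w)) := by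
  obtain ⟨d, hd, hdD, hσ⟩ := hσ
  have hvec : ∀ i, IsBoundedInt (2 * Fintype.card ι * D * a) ((d • (σ z - w)) i) := by
    intro i
    have hsub := (IsBoundedInt.end_apply (f := d • σ) hσ hz i).sub (hdD.mul (hw i))
    rw [Pi.smul_apply, Pi.sub_apply, smul_sub]
    refine hsub.mono ?_
    have : D * a ≤ Fintype.card ι * (D * a) := Nat.le_mul_of_pos_left _ Fintype.card_pos
    nlinarith
  have hne : B (d • (σ z - w)) (d • (σ z - w)) ≠ 0 := by
    simpa only [map_smul, LinearMap.smul_apply, smul_eq_mul, mul_ne_zero_iff_left hd] using hzw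
  have h := AffineHeightLE.orthReflection hB hvec hne
  rw [orthReflection_smul_vector hd] at h
  exact h.mono (by ring_nf; rfl)

end AffineHeightLE

lemma IsBoundedInt.deflate_apply_single [Fintype ι]
    (hB : ∀ i j, IsBoundedInt H (B (Pi.single i 1) (Pi.single j 1)))
    (hP : ∀ i j, IsBoundedInt p (P (Pi.single j 1) i)) (hz : ∀ i, IsBoundedInt a (z i))
    (i j : ι) :
    IsBoundedInt (2 * Fintype.card ι ^ 2 * H * a ^ 2 * p) (deflate B P z (Pi.single j 1) i) := by
  have hsub := ((form_apply hB hz hz).mul (hP i j)).sub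
    ((form_apply hB hz (hP · j)).mul (hz i))
  exact hsub.mono (by ring_nf; rfl)

/-- Since `det σ = ±1`, the power `c ^ n = ± det (c • σ)` is an integer, hence so is `c`. -/
lemma AffineHeightLE.of_isOrthogonal [Fintype ι] [Nonempty ι] (hB : B.Nondegenerate)
    (hσ : B.IsOrthogonal σ) (hc : c ≠ 0) (h : ∀ i j, IsBoundedInt D (c * σ (Pi.single j 1) i)) :
    AffineHeightLE ((Fintype.card ι).factorial * D) σ := by
  have hpow : IsBoundedInt ((Fintype.card ι).factorial * D ^ Fintype.card ι)
      (c ^ Fintype.card ι) := by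
    have hdet := IsBoundedInt.det (M := c • LinearMap.toMatrix' σ) h
    rw [Matrix.det_smul, LinearMap.det_toMatrix'] at hdet
    rcases mul_self_eq_one_iff.mp (det_mul_self_of_isOrthogonal hB hσ) with hσ1 | hσ1
    · rwa [hσ1, mul_one] at hdet
    · simpa only [hσ1, mul_neg_one, neg_neg] using hdet.neg
  exact ⟨c, hc, hpow.of_pow Fintype.card_ne_zero,
    fun i j => (h i j).mono (Nat.le_mul_of_pos_left _ (Nat.factorial_pos _))⟩

end AffineHeight

section Factorization

variable {ι : Type*} [DecidableEq ι] {B : LinearMap.BilinForm ℚ (ι → ℚ)} {σ : End ℚ (ι → ℚ)}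
  {l l' M M' : ℕ} {v : ι → ℚ}

/-- `σ` is a product of at most `l` reflections in `B`-anisotropic vectors, each of affine height at
most `M`. -/
def HasReflectionFactorization (B : LinearMap.BilinForm ℚ (ι → ℚ)) (σ : End ℚ (ι → ℚ))
    (l M : ℕ) : Prop :=
  ∃ L : List (End ℚ (ι → ℚ)), L.length ≤ l ∧ σ = L.prod ∧
    ∀ τ ∈ L, (∃ v, B v v ≠ 0 ∧ τ = orthReflection B v) ∧ AffineHeightLE M τ

namespace HasReflectionFactorization

protected lemma one (B : LinearMap.BilinForm ℚ (ι → ℚ)) (l M : ℕ) :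
    HasReflectionFactorization B 1 l M :=
  ⟨[], by simp⟩

lemma of_smul {c : ℚ} (hc : c ≠ 0) (h : HasReflectionFactorization (c • B) σ l M) :
    HasReflectionFactorization B σ l M := by
  obtain ⟨L, hL, hσ, hLτ⟩ := h
  refine ⟨L, hL, hσ, fun τ hτ => ?_⟩
  obtain ⟨⟨v, hv, rfl⟩, hM⟩ := hLτ τ hτ
  exact ⟨⟨v, right_ne_zero_of_mul hv, orthReflection_smul_form hc B v⟩, hM⟩

lemma mono (h : HasReflectionFactorization B σ l M) (hl : l ≤ l') (hM : M ≤ M') :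
    HasReflectionFactorization B σ l' M' :=
  let ⟨L, hL, hσ, hτ⟩ := h
  ⟨L, hL.trans hl, hσ, fun τ hτL => ⟨(hτ τ hτL).1, (hτ τ hτL).2.mono hM⟩⟩

lemma of_orthReflection_mul (hv : B v v ≠ 0) (hτ : AffineHeightLE M (orthReflection B v))
    (h : HasReflectionFactorization B (orthReflection B v * σ) l M) :
    HasReflectionFactorization B σ (l + 1) M := by
  obtain ⟨L, hL, hσ, hLτ⟩ := h
  refine ⟨orthReflection B v :: L, by simpa using hL, ?_, List.forall_mem_cons.mpr
    ⟨⟨⟨v, hv, rfl⟩, hτ⟩, hLτ⟩⟩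
  rw [List.prod_cons, ← hσ, ← mul_assoc, orthReflection_mul_self hv, one_mul]

end HasReflectionFactorization

end Factorization

section Descent

/-- If the Gram matrix and the projection of a descent state have integral entries bounded by `H`
and `p`, then this number bounds the loss of height in one step of the descent. -/
def descentFactor (ι : Type*) [Fintype ι] (H p : ℕ) : ℕ := 48 * Fintype.card ι ^ 4 * H * p ^ 2

lemma descentFactor_mul_descentFactor (ι : Type*) [Fintype ι] (H p : ℕ) :
    descentFactor ι H (p * descentFactor ι H p) = descentFactor ι H p ^ 3 := by
  simp only [descentFactor]
  ring

lemma three_mul_descent_exponent_add_le (s : ℕ) :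
    3 * ((s + 1) * 5 ^ s / 3) + 2 * 5 ^ s ≤ (s + 1 + 1) * 5 ^ (s + 1) / 3 := by
  rw [Nat.le_div_iff_mul_le three_pos]
  calc
    (3 * ((s + 1) * 5 ^ s / 3) + 2 * 5 ^ s) * 3 ≤ 3 * ((s + 1) * 5 ^ s) + 2 * 5 ^ s * 3 := by lia
    _ ≤ (s + 1 + 1) * 5 ^ (s + 1) := by ring_nf; lia

variable {ι : Type*} [DecidableEq ι] {B : LinearMap.BilinForm ℚ (ι → ℚ)}
  {P σ : End ℚ (ι → ℚ)} {q : ℚ} {H p a D l M r : ℕ} {v w z : ι → ℚ}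

/-- The state of the descent: `σ` is an isometry of affine height at most `D`, trivial on the kernel
of `P`, and `P` is `q` times an orthogonal projection, with integral entries bounded by `p`. So `σ`
is an isometry of the range of `P`, whose dimension decreases in the descent. -/
structure IsDescentState (B : LinearMap.BilinForm ℚ (ι → ℚ)) (P σ : End ℚ (ι → ℚ)) (q : ℚ)
    (p D : ℕ) : Prop where
  proj : IsScaledOrthProj B P q
  proj_bounded : ∀ i j, IsBoundedInt p (P (Pi.single j 1) i)
  isOrthogonal : B.IsOrthogonal σ
  apply_of_proj_eq_zero : ∀ x, P x = 0 → σ x = x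
  height : AffineHeightLE D σ

lemma exists_affineHeightLE_orthReflection [Fintype ι]
    (hBH : ∀ i j, IsBoundedInt H (B (Pi.single i 1) (Pi.single j 1)))
    (hzp : ∀ i, IsBoundedInt (2 * p) (z i)) (hzz : B z z ≠ 0) :
    ∃ e, AffineHeightLE e (orthReflection B z) ∧
      Fintype.card ι ^ 2 * e ≤ descentFactor ι H p := by
  refine ⟨_, AffineHeightLE.orthReflection hBH hzp hzz, ?_⟩
  rw [descentFactor]
  ring_nf
  lia

namespace IsDescentState

lemma mono (h : IsDescentState B P σ q p a) (ha : a ≤ D) : IsDescentState B P σ q p D :=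
  { h with height := h.height.mono ha }

lemma eq_one (h : IsDescentState B 0 σ q p D) : σ = 1 :=
  LinearMap.ext fun x => h.apply_of_proj_eq_zero x rfl

lemma exists_anisotropic [Finite ι] (hB : B.IsSymm) (hB' : B.Nondegenerate)
    (h : IsDescentState B P σ q p D) (hP : P ≠ 0) :
    ∃ z, P z = q • z ∧ (∀ i, IsBoundedInt (2 * p) (z i)) ∧ B z z ≠ 0 := by
  obtain ⟨i, j, hij⟩ := h.proj.exists_anisotropic (Pi.basisFun ℚ ι) hB hB' hP
  refine ⟨_, h.proj.apply_apply _, fun k => ?_, hij⟩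
  rw [map_add, Pi.basisFun_apply, Pi.basisFun_apply, two_mul]
  exact (h.proj_bounded k i).add (h.proj_bounded k j)

lemma proj_apply_apply (hB' : B.Nondegenerate) (h : IsDescentState B P σ q p D)
    (hz : P z = q • z) : P (σ z) = q • σ z := by
  have hsub := h.proj.apply_sub_of_isOrthogonal hB' h.isOrthogonal h.apply_of_proj_eq_zero z
  rwa [map_sub, smul_sub, hz, sub_left_inj] at hsub

variable [Fintype ι]

lemma orthReflection_mul [Nonempty ι] (hB : B.IsSymm) (h : IsDescentState B P σ q p D)
    (hv : P v = q • v) (hvv : B v v ≠ 0) (hτ : AffineHeightLE a (orthReflection B v)) :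
    IsDescentState B P (orthReflection B v * σ) q p (Fintype.card ι * (a * D)) where
  proj := h.proj
  proj_bounded := h.proj_bounded
  isOrthogonal x y := by
    rw [End.mul_apply, End.mul_apply, isOrthogonal_orthReflection hB hvv, h.isOrthogonal]
  apply_of_proj_eq_zero x hx := by
    rw [End.mul_apply, h.apply_of_proj_eq_zero x hx,
      orthReflection_apply_of_form_eq_zero (h.proj.form_eq_zero hv hx)]
  height := hτ.mul h.height

lemma deflate [Nonempty ι] (hB : B.IsSymm)
    (hBH : ∀ i j, IsBoundedInt H (B (Pi.single i 1) (Pi.single j 1)))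
    (h : IsDescentState B P σ q p D) (hz : P z = q • z)
    (hzp : ∀ i, IsBoundedInt (2 * p) (z i)) (hzz : B z z ≠ 0) (hσz : σ z = z) :
    IsDescentState B (deflate B P z) σ (B z z * q) (p * descentFactor ι H p) D where
  proj := h.proj.deflate hB hz hzz
  proj_bounded i j := by
    refine (IsBoundedInt.deflate_apply_single hBH h.proj_bounded hzp i j).mono ?_
    calc
      2 * Fintype.card ι ^ 2 * H * (2 * p) ^ 2 * p =
          p * (8 * Fintype.card ι ^ 2 * H * p ^ 2) := by ring
      _ ≤ p * descentFactor ι H p := by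
        unfold descentFactor
        gcongr
        · norm_num
        · exact Fintype.card_pos
        · norm_num
  isOrthogonal := h.isOrthogonal
  apply_of_proj_eq_zero x hx :=
    apply_eq_self_of_deflate_eq_zero h.proj hz hzz h.apply_of_proj_eq_zero hσz hx
  height := h.height

lemma orthReflection_apply_sub_mul [Nonempty ι] (hB : B.IsSymm) (hB' : B.Nondegenerate)
    (hBH : ∀ i j, IsBoundedInt H (B (Pi.single i 1) (Pi.single j 1)))
    (h : IsDescentState B P σ q p D) (hz : P z = q • z) (hw : P w = q • w)
    (hzp : ∀ i, IsBoundedInt (2 * p) (z i)) (hwp : ∀ i, IsBoundedInt (2 * p) (w i))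
    (hvv : B (σ z - w) (σ z - w) ≠ 0) :
    AffineHeightLE (descentFactor ι H p * D ^ 2) (orthReflection B (σ z - w)) ∧
      IsDescentState B P (orthReflection B (σ z - w) * σ) q p
        (Fintype.card ι * (descentFactor ι H p * D ^ 2 * D)) := by
  have hheight : AffineHeightLE (descentFactor ι H p * D ^ 2) (orthReflection B (σ z - w)) :=
    (AffineHeightLE.orthReflection_apply_sub hBH h.height hzp hwp hvv).mono
      (by rw [descentFactor]; ring_nf; rfl)
  have hv : P (σ z - w) = q • (σ z - w) := by
    rw [map_sub, h.proj_apply_apply hB' hz, hw, smul_sub]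
  exact ⟨hheight, h.orthReflection_mul hB hv hvv hheight⟩

lemma exists_factor_apply_eq_self [Nonempty ι] (hB : B.IsSymm) (hB' : B.Nondegenerate)
    (hBH : ∀ i j, IsBoundedInt H (B (Pi.single i 1) (Pi.single j 1)))
    (h : IsDescentState B P σ q p D) (hz : P z = q • z)
    (hzp : ∀ i, IsBoundedInt (2 * p) (z i)) (hzz : B z z ≠ 0) :
    ∃ σ', IsDescentState B P σ' q p (descentFactor ι H p ^ 2 * D ^ 3) ∧ σ' z = z ∧
      ∀ l M, descentFactor ι H p * D ^ 2 ≤ M → HasReflectionFactorization B σ' l M →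
        HasReflectionFactorization B σ (l + 2) M := by
  obtain ⟨e, hτz, heQ⟩ := exists_affineHeightLE_orthReflection hBH hzp hzz
  set Q := descentFactor ι H p
  have he : e ≤ Q := (Nat.le_mul_of_pos_left _ (pow_pos Fintype.card_pos 2)).trans heQ
  have hcard : Fintype.card ι ≤ Q :=
    (Nat.le_self_pow two_ne_zero _).trans ((Nat.le_mul_of_pos_right _ hτz.one_le).trans heQ)
  have hnorm : B (σ z) (σ z) = B z z := h.isOrthogonal z z
  rcases form_sub_self_ne_zero_or_form_add_self_ne_zero hnorm hzz with hv | hv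
  · obtain ⟨hτ, hstate⟩ := h.orthReflection_apply_sub_mul hB hB' hBH hz hz hzp hzp hv
    refine ⟨_, hstate.mono ?_, orthReflection_sub_apply hB hnorm hv, fun l M hM hfac => ?_⟩
    · calc
        Fintype.card ι * (Q * D ^ 2 * D) = Fintype.card ι * (Q * D ^ 3) := by ring
        _ ≤ Q * (Q * D ^ 3) := by gcongr
        _ = Q ^ 2 * D ^ 3 := by ring
    · exact (hfac.of_orthReflection_mul hv (hτ.mono hM)).mono (Nat.le_succ _) le_rfl
  · rw [← sub_neg_eq_add] at hv
    have hnz : P (-z) = q • -z := by rw [map_neg, hz, smul_neg]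
    obtain ⟨hτ, hstate⟩ := h.orthReflection_apply_sub_mul hB hB' hBH hz hnz hzp
      (fun i => (hzp i).neg) hv
    refine ⟨_, (hstate.orthReflection_mul hB hz hzz hτz).mono ?_, ?_, fun l M hM hfac => ?_⟩
    · calc
        Fintype.card ι * (e * (Fintype.card ι * (Q * D ^ 2 * D))) =
            Fintype.card ι ^ 2 * e * (Q * D ^ 3) := by ring
        _ ≤ Q * (Q * D ^ 3) := by gcongr
        _ = Q ^ 2 * D ^ 3 := by ring
    · have hσz : orthReflection B (σ z - -z) (σ z) = -z :=
        orthReflection_sub_apply hB (by simpa using hnorm) hv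
      rw [End.mul_apply, End.mul_apply, hσz, map_neg, orthReflection_apply_self hzz, neg_neg]
    · have heM : e ≤ M :=
        (he.trans (Nat.le_mul_of_pos_right _ (pow_pos h.height.one_le 2))).trans hM
      exact (hfac.of_orthReflection_mul hzz (hτz.mono heM)).of_orthReflection_mul hv (hτ.mono hM)

lemma hasReflectionFactorization_of_forall_lt [Nonempty ι] (hB : B.IsSymm) (hB' : B.Nondegenerate)
    (hBH : ∀ i j, IsBoundedInt H (B (Pi.single i 1) (Pi.single j 1)))
    (h : IsDescentState B P σ q p D) (hM : descentFactor ι H p * D ^ 2 ≤ M)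
    (ih : ∀ {P' σ' q'}, IsDescentState B P' σ' q' (p * descentFactor ι H p)
        (descentFactor ι H p ^ 2 * D ^ 3) →
      finrank ℚ (LinearMap.range P') < finrank ℚ (LinearMap.range P) →
      HasReflectionFactorization B σ' l M) :
    HasReflectionFactorization B σ (l + 2) M := by
  rcases eq_or_ne P 0 with rfl | hP
  · exact h.eq_one ▸ .one B _ _
  obtain ⟨z, hz, hzp, hzz⟩ := h.exists_anisotropic hB hB' hP
  obtain ⟨σ', h', hσ'z, hfac⟩ := h.exists_factor_apply_eq_self hB hB' hBH hz hzp hzz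
  exact hfac l M hM <| ih (h'.deflate hB hBH hz hzp hzz hσ'z) <|
    Submodule.finrank_lt_finrank_of_lt (range_deflate_lt_range (h.proj.mem_range hz) hzz)

lemma hasReflectionFactorization_of_finrank_le_one [Nonempty ι] (hB : B.IsSymm)
    (hB' : B.Nondegenerate) (hBH : ∀ i j, IsBoundedInt H (B (Pi.single i 1) (Pi.single j 1)))
    (h : IsDescentState B P σ q p D) (hrank : finrank ℚ (LinearMap.range P) ≤ 1) :
    HasReflectionFactorization B σ 1 (descentFactor ι H p) := by
  rcases eq_or_ne P 0 with rfl | hP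
  · exact h.eq_one ▸ .one B 1 _
  obtain ⟨z, hz, hzp, hzz⟩ := h.exists_anisotropic hB hB' hP
  have hdefl : _root_.deflate B P z = 0 :=
    deflate_eq_zero_of_finrank_range_le_one hrank (h.proj.mem_range hz) hzz
  have eq_one_of_apply : ∀ {σ' : End ℚ (ι → ℚ)} {D'}, IsDescentState B P σ' q p D' → σ' z = z →
      σ' = 1 := fun h' hσ'z => (hdefl ▸ h'.deflate hB hBH hz hzp hzz hσ'z).eq_one
  rcases apply_eq_self_or_neg_of_deflate_eq_zero h.proj h.isOrthogonal
    (h.proj_apply_apply hB' hz) hzz (by rw [hdefl, LinearMap.zero_apply]) with hσz | hσz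
  · exact eq_one_of_apply h hσz ▸ .one B 1 _
  · obtain ⟨e, hτz, heQ⟩ := exists_affineHeightLE_orthReflection hBH hzp hzz
    have he : e ≤ descentFactor ι H p :=
      (Nat.le_mul_of_pos_left _ (pow_pos Fintype.card_pos 2)).trans heQ
    have hτσ : orthReflection B z * σ = 1 :=
      eq_one_of_apply (h.orthReflection_mul hB hz hzz hτz)
        (by rw [End.mul_apply, hσz, map_neg, orthReflection_apply_self hzz, neg_neg])
    exact .of_orthReflection_mul (l := 0) hzz (hτz.mono he) (hτσ ▸ .one B 0 _)

theorem hasReflectionFactorization [Nonempty ι] (hB : B.IsSymm)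
    (hB' : B.Nondegenerate) (hBH : ∀ i j, IsBoundedInt H (B (Pi.single i 1) (Pi.single j 1)))
    (h : IsDescentState B P σ q p D) (hr : 2 ≤ r) (hrank : finrank ℚ (LinearMap.range P) ≤ r) :
    HasReflectionFactorization B σ (2 * r - 1)
      (descentFactor ι H p ^ (r * 5 ^ (r - 1) / 3) * D ^ 5 ^ (r - 1)) := by
  induction r, hr using Nat.le_induction generalizing P σ q p D with
  | base =>
    refine h.hasReflectionFactorization_of_forall_lt (l := 1) hB hB' hBH ?_ fun h' hlt => ?_
    · exact Nat.mul_le_mul (Nat.le_self_pow (by norm_num) _)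
        (Nat.pow_le_pow_right h.height.one_le (by norm_num))
    · have hσ' := h'.hasReflectionFactorization_of_finrank_le_one hB hB' hBH (by lia)
      rw [descentFactor_mul_descentFactor] at hσ'
      exact hσ'.mono le_rfl (Nat.le_mul_of_pos_right _ (pow_pos h.height.one_le _))
  | succ r hr ih =>
    obtain ⟨s, rfl⟩ : ∃ s, r = s + 1 := ⟨r - 1, by lia⟩
    simp only [Nat.add_sub_cancel] at ih ⊢
    have hpow : 1 ≤ 5 ^ s := Nat.one_le_pow' s 4
    have hexp := three_mul_descent_exponent_add_le s
    refine h.hasReflectionFactorization_of_forall_lt (l := 2 * (s + 1) - 1) hB hB' hBH ?_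
      fun h' hlt => (ih h' (by lia)).mono le_rfl ?_
    · exact Nat.mul_le_mul (Nat.le_self_pow (by lia) _)
        (Nat.pow_le_pow_right h.height.one_le (by lia))
    · have hQ : 1 ≤ descentFactor ι H p := Nat.pos_of_ne_zero fun h0 => by
        simpa [h0] using h'.height.one_le
      have hD := h.height.one_le
      rw [descentFactor_mul_descentFactor]
      generalize descentFactor ι H p = Q at hQ
      calc
        (Q ^ 3) ^ ((s + 1) * 5 ^ s / 3) * (Q ^ 2 * D ^ 3) ^ 5 ^ s =
            Q ^ (3 * ((s + 1) * 5 ^ s / 3) + 2 * 5 ^ s) * D ^ (3 * 5 ^ s) := by ring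
        _ ≤ Q ^ ((s + 1 + 1) * 5 ^ (s + 1) / 3) * D ^ 5 ^ (s + 1) := by
          gcongr
          lia

end IsDescentState

end Descent

section Matrix

variable {ι : Type*} [Fintype ι] [DecidableEq ι]

lemma entries_ne_zero_of_det_ne_zero [Nonempty ι] {M : Matrix ι ι ℚ} (hM : M.det ≠ 0) :
    (fun ij : ι × ι => M ij.1 ij.2) ≠ 0 := fun h0 => hM <| by
  have hM0 : M = 0 := Matrix.ext fun i j => congrFun h0 (i, j)
  rw [hM0, Matrix.det_zero]

theorem hasReflectionFactorization_toBilin' {G : Matrix ι ι ℚ} {σ : End ℚ (ι → ℚ)}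
    (hι : 2 ≤ Fintype.card ι) (hG : G.IsSymm) (hG' : G.det ≠ 0)
    (hσ : (Matrix.toBilin' G).IsOrthogonal σ) :
    HasReflectionFactorization (Matrix.toBilin' G) σ (2 * Fintype.card ι - 1)
      (descentFactor ι (projHeight fun ij : ι × ι => G ij.1 ij.2) 1 ^
          (Fintype.card ι * 5 ^ (Fintype.card ι - 1) / 3) *
        ((Fintype.card ι).factorial *
          projHeight fun ij : ι × ι => LinearMap.toMatrix' σ ij.1 ij.2) ^
            5 ^ (Fintype.card ι - 1)) := by
  have : Nonempty ι := Fintype.card_pos_iff.mp (by lia)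
  have hB' := LinearMap.BilinForm.nondegenerate_toBilin'_iff_det_ne_zero.mpr hG'
  have hσdet : (LinearMap.toMatrix' σ).det ≠ 0 := by
    rw [LinearMap.det_toMatrix']
    exact left_ne_zero_of_mul_eq_one (det_mul_self_of_isOrthogonal hB' hσ)
  obtain ⟨c, hc, hGH⟩ := exists_isBoundedInt_projHeight_mul (entries_ne_zero_of_det_ne_zero hG')
  obtain ⟨d, hd, hσK⟩ := exists_isBoundedInt_projHeight_mul (entries_ne_zero_of_det_ne_zero hσdet)
  have hcB : (Matrix.toBilin' (c • G)).IsSymm := by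
    rw [Matrix.isSymm_toBilin'_iff_isSymm]
    exact hG.smul c
  have hcB' : (Matrix.toBilin' (c • G)).Nondegenerate := by
    rw [LinearMap.BilinForm.nondegenerate_toBilin'_iff_det_ne_zero, Matrix.det_smul]
    exact mul_ne_zero (pow_ne_zero _ hc) hG'
  have hstate : IsDescentState (Matrix.toBilin' (c • G)) 1 σ 1 1 _ :=
    { proj := .one _
      proj_bounded := IsBoundedInt.pi_single
      isOrthogonal := fun x y => by simpa [hc] using hσ x y
      apply_of_proj_eq_zero := fun x hx => by simp_all
      height := .of_isOrthogonal hB' hσ hd fun i j => hσK (i, j) }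
  refine .of_smul hc ?_
  rw [← map_smul]
  exact hstate.hasReflectionFactorization hcB hcB' (fun i j => by simpa using hGH (i, j)) hι
    ((Submodule.finrank_le _).trans_eq (finrank_fintype_fun_eq_card ℚ))

variable {N l M : ℕ} {f : Fin N → Fin N → ℚ}

lemma form_toBilin'_eq_sum (f : Fin N → Fin N → ℚ) (x y : Fin N → ℚ) :
    Matrix.toBilin' (Matrix.of f) x y = ∑ i, ∑ j, f i j * x i * y j := by
  simp only [Matrix.toBilin'_apply, Matrix.of_apply, mul_comm (x _)]

lemma IsIsometry.isOrthogonal_toLin' {S : Matrix (Fin N) (Fin N) ℚ} (hS : IsIsometry N f S) :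
    (Matrix.toBilin' (Matrix.of f)).IsOrthogonal (Matrix.toLin' S) := by
  intro x y
  simpa only [form_toBilin'_eq_sum, Matrix.toLin'_apply] using hS.2 x y

lemma isReflection_toMatrix'_orthReflection (hf : (Matrix.of f).IsSymm) {v : Fin N → ℚ}
    (hv : Matrix.toBilin' (Matrix.of f) v v ≠ 0) :
    IsReflection N f (LinearMap.toMatrix' (orthReflection (Matrix.toBilin' (Matrix.of f)) v)) := by
  have hB := Matrix.isSymm_toBilin'_iff_isSymm.mpr hf
  refine ⟨⟨?_, fun x y => ?_⟩, ?_⟩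
  · rw [← Matrix.isUnit_iff_isUnit_det]
    refine IsUnit.of_mul_eq_one
      (LinearMap.toMatrix' (orthReflection (Matrix.toBilin' (Matrix.of f)) v)) ?_
    rw [← LinearMap.toMatrix'_mul, orthReflection_mul_self hv, LinearMap.toMatrix'_one]
  · simpa only [LinearMap.toMatrix'_mulVec, form_toBilin'_eq_sum] using
      isOrthogonal_orthReflection hB hv x y
  · rw [← Matrix.toLin'_apply', Matrix.toLin'_toMatrix']
    have hker := finrank_ker_orthReflection_sub_id hv
    rw [finrank_fin_fun] at hker
    lia

lemma HasReflectionFactorization.exists_list_isReflection {S : Matrix (Fin N) (Fin N) ℚ}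
    (hf : (Matrix.of f).IsSymm)
    (h : HasReflectionFactorization (Matrix.toBilin' (Matrix.of f)) (Matrix.toLin' S) l M) :
    ∃ L : List (Matrix (Fin N) (Fin N) ℚ), L.length ≤ l ∧ S = L.prod ∧
      ∀ τ ∈ L, IsReflection N f τ ∧ matHeight τ ≤ M := by
  obtain ⟨L, hL, hS, hτ⟩ := h
  refine ⟨L.map LinearMap.toMatrixAlgEquiv', by simpa using hL, ?_, ?_⟩
  · rw [← map_list_prod, ← hS]
    exact (LinearMap.toMatrix'_toLin' S).symm
  · rintro _ hmem
    obtain ⟨τ, hτL, rfl⟩ := List.mem_map.mp hmem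
    obtain ⟨⟨v, hv, rfl⟩, hM⟩ := hτ τ hτL
    exact ⟨isReflection_toMatrix'_orthReflection hf hv, hM.matHeight_toMatrix'_le⟩

lemma natCast_pow_div_le_rpow_pow {Q : ℕ} (hQ : 1 ≤ Q) (n k m : ℕ) :
    (Q : ℝ) ^ (n * k / m) ≤ ((Q : ℝ) ^ ((n : ℝ) / m)) ^ k := by
  rw [← Real.rpow_natCast, ← Real.rpow_natCast, ← Real.rpow_mul (by positivity)]
  refine Real.rpow_le_rpow_of_exponent_le (by exact_mod_cast hQ) ?_
  calc
    ((n * k / m : ℕ) : ℝ) ≤ (n * k : ℕ) / m := Nat.cast_div_le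
    _ = n / m * k := by push_cast; ring

lemma natCast_descentFactor_pow_mul_pow_le {H : ℕ} (hN : 1 ≤ N) (hH : 1 ≤ H) (K k : ℕ) :
    ((descentFactor (Fin N) H 1 ^ (N * k / 3) * (N.factorial * K) ^ k : ℕ) : ℝ) ≤
      (((48 * N ^ 4 : ℕ) : ℝ) ^ ((N : ℝ) / 3) * N.factorial) ^ k *
        ((H : ℝ) ^ ((N : ℝ) / 3) * K) ^ k := by
  have hQ : descentFactor (Fin N) H 1 = 48 * N ^ 4 * H := by simp [descentFactor]
  have hQ1 : 0 < 48 * N ^ 4 * H := by positivity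
  rw [hQ, Nat.cast_mul, Nat.cast_pow, Nat.cast_pow]
  calc
    ((48 * N ^ 4 * H : ℕ) : ℝ) ^ (N * k / 3) * ((N.factorial * K : ℕ) : ℝ) ^ k ≤
        (((48 * N ^ 4 * H : ℕ) : ℝ) ^ ((N : ℝ) / 3)) ^ k * ((N.factorial * K : ℕ) : ℝ) ^ k := by
      gcongr
      exact_mod_cast natCast_pow_div_le_rpow_pow hQ1 N k 3
    _ = _ := by
      rw [Nat.cast_mul (48 * N ^ 4), Real.mul_rpow (by positivity) (by positivity),
        Nat.cast_mul N.factorial]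
      ring

end Matrix

/-- **Effective Cartan–Dieudonné theorem over ℚ.** If `(ℚ^N, F)` is a regular quadratic space,
then every non-identity isometry `σ` is a product of `1 ≤ l ≤ 2N − 1` reflections `τ_i` with
`H(τ_i) ≤ C(N) · (H(F)^(N/3) · H(σ))^(5^(N−1))`. -/
theorem effective_cartan_dieudonne (N : ℕ) (hN : 2 ≤ N) :
    ∃ C : ℝ, 0 < C ∧
      ∀ (f : Fin N → Fin N → ℚ), (∀ i j, f i j = f j i) →
      (Matrix.of f).det ≠ 0 →
      ∀ σ : Matrix (Fin N) (Fin N) ℚ, IsIsometry N f σ →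
      σ = 1 ∨
        ∃ l : ℕ, 1 ≤ l ∧ l ≤ 2 * N - 1 ∧
          ∃ τ : Fin l → Matrix (Fin N) (Fin N) ℚ,
            (∀ i, IsReflection N f (τ i)) ∧
            σ = (List.ofFn τ).prod ∧
            ∀ i, ((matHeight (τ i) : ℕ) : ℝ) ≤
              C * (((projHeight fun p : Fin N × Fin N => f p.1 p.2 : ℕ) : ℝ) ^ ((N : ℝ) / 3) *
                  ((matHeight σ : ℕ) : ℝ)) ^ (5 ^ (N - 1)) := by
  refine ⟨(((48 * N ^ 4 : ℕ) : ℝ) ^ ((N : ℝ) / 3) * N.factorial) ^ 5 ^ (N - 1), by positivity,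
    fun f hf hdet σ hσ => ?_⟩
  have hsymm : (Matrix.of f).IsSymm := Matrix.IsSymm.ext fun i j => hf j i
  have hfac := hasReflectionFactorization_toBilin' (by simpa using hN) hsymm hdet
    hσ.isOrthogonal_toLin'
  obtain ⟨L, hlen, hσL, hL⟩ := hfac.exists_list_isReflection hsymm
  rcases eq_or_ne L [] with rfl | hne
  · exact .inl hσL
  refine .inr ⟨L.length, List.length_pos_iff.mpr hne, by simpa using hlen, L.get,
    fun i => (hL _ (L.get_mem i)).1, by rwa [List.ofFn_get], fun i => ?_⟩
  have := Fin.pos_iff_nonempty.mp (pos_of_gt hN)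
  have hH := one_le_projHeight (entries_ne_zero_of_det_ne_zero hdet)
  have hheight := (hL _ (L.get_mem i)).2
  rw [Fintype.card_fin, LinearMap.toMatrix'_toLin'] at hheight
  exact (Nat.cast_le.mpr hheight).trans
    (natCast_descentFactor_pow_mul_pow_le (one_le_two.trans hN) hH (matHeight σ) _)
end

section
/- For every N ≥ 2 there is a constant C_N depending only on N with the following property. Let Q(X) = F(X) + L(X) + A be a quadratic polynomial in N variables with rational coefficients, where F is a nonzero quadratic form, L is a linear form, and A ∈ ℚ. If Q has a zero x ∈ ℚ^N, then there exists x ∈ ℚ^N with Q(x) = 0 and h(x) ≤ C_N · H(Q)^{(N+1)/2}. -/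
/-- Inhomogeneous height `h(x) = H(1, x)` of a rational vector. -/
noncomputable def inhomHeight {N : ℕ} (x : Fin N → ℚ) : ℕ :=
  projHeight (Fin.cons 1 x)

/-- Height of the quadratic polynomial `Q(X) = Σ f_{ij} X_i X_j + Σ l_i X_i + A`: the
homogeneous height of its coefficient vector. -/
noncomputable def quadPolyHeight {N : ℕ} (f : Fin N → Fin N → ℚ) (l : Fin N → ℚ) (A : ℚ) : ℕ :=
  projHeight (Sum.elim (fun p : Fin N × Fin N => f p.1 p.2) (Sum.elim l fun _ : Unit => A))

/-!
Clear denominators and homogenize: zeros of `Q` become integer isotropic vectors `v`, `v₀ ≠ 0`, of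
a symmetric form `B` in `N + 1` variables with coefficients `O(H(Q))`.

Small isotropic vectors come from a descent in the style of Cassels. Given an isotropic `a` of large
norm `M`, Dirichlet's theorem provides an integer vector `x` and `0 < q < M` with
`‖x - (q / M) a‖ ≤ 1 / T`, where `T` is a multiple of `H(Q)^(1/2)`. If `x` is anisotropic, then
reflecting `a` in `x`, without denominators, gives a strictly shorter isotropic vector; otherwise
`x` or `a - x` is one. Since one coordinate of `a` is `± M`, only `N` coordinates have to be
approximated, and the descent runs until `‖a‖ ≤ T ^ N`.

The descent stays off the hyperplane `v₀ = 0` if all isotropic vectors in there lie in the radical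
of `B`. Otherwise a descent within this hyperplane, staying off the radical, gives an isotropic
vector of norm at most `T ^ (N - 1)`; one reflection in a vector of norm `1` moves it off the
hyperplane at the cost of a factor `O(H(Q))`, that is, of two powers of `T`.
-/

section IntegerVectors

variable {ι : Type*} [Fintype ι]

theorem norm_eq_sup_natAbs (z : ι → ℤ) :
    ‖z‖ = (Finset.univ.sup fun i ↦ (z i).natAbs : ℕ) := by
  rw [Pi.norm_def, ← NNReal.coe_natCast, Nat.cast_finsetSup]
  simp only [NNReal.natCast_natAbs]

theorem one_le_norm_of_ne_zero {z : ι → ℤ} (hz : z ≠ 0) : 1 ≤ ‖z‖ := by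
  have norm_pos : 0 < ‖z‖ := norm_pos_iff.2 hz
  rw [norm_eq_sup_natAbs] at norm_pos ⊢
  exact_mod_cast norm_pos

theorem exists_norm_apply_eq_norm {z : ι → ℤ} (hz : z ≠ 0) : ∃ i, ‖z i‖ = ‖z‖ := by
  obtain ⟨k, -⟩ := Function.ne_iff.1 hz
  obtain ⟨i, -, hi⟩ :=
    Finset.exists_mem_eq_sup Finset.univ ⟨k, Finset.mem_univ k⟩ fun i ↦ ‖z i‖₊
  exact ⟨i, by rw [Pi.norm_def, hi, coe_nnnorm]⟩

end IntegerVectors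

section SimultaneousApproximation

open MeasureTheory in
theorem exists_abs_nat_mul_sub_round_le {κ : Type*} [Fintype κ] (ξ : κ → ℝ) {T : ℝ}
    (hT : 1 ≤ T) :
    ∃ q : ℕ, 0 < q ∧ q ≤ T ^ Fintype.card κ ∧ ∀ k, |q * ξ k - round (q * ξ k)| ≤ T⁻¹ := by
  have T_pos : 0 < T := one_pos.trans_le hT
  have floor_pos : 0 < ⌊T ^ Fintype.card κ⌋₊ := Nat.floor_pos.2 (one_le_pow₀ hT)
  have volume_ball : volume (Metric.closedBall (0 : κ → UnitAddCircle) (T⁻¹ / 2)) =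
      ENNReal.ofReal (T⁻¹ ^ Fintype.card κ) := by
    rw [closedBall_pi _ (by positivity), volume_pi_pi]
    rw [ENNReal.ofReal_pow (inv_nonneg.2 T_pos.le)]
    simp [AddCircle.volume_closedBall, mul_div_cancel₀, min_eq_right (inv_le_one_of_one_le₀ hT)]
  obtain ⟨q, ⟨hq_pos, hq_le⟩, hq⟩ := NormedAddCommGroup.exists_norm_nsmul_le (μ := volume)
    (fun k ↦ (ξ k : UnitAddCircle)) floor_pos T⁻¹ (by
      rw [volume_ball, nsmul_eq_mul, ← ENNReal.ofReal_natCast,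
        ← ENNReal.ofReal_mul (Nat.cast_nonneg _), ← Set.pi_univ Set.univ, volume_pi_pi]
      have := (Nat.lt_floor_add_one (T ^ Fintype.card κ)).le
      simpa [← div_eq_mul_inv, one_le_div (pow_pos T_pos _)] using this)
  refine ⟨q, hq_pos, (Nat.le_floor_iff (by positivity)).1 hq_le, fun k ↦ ?_⟩
  rw [← UnitAddCircle.norm_eq, ← nsmul_eq_mul, AddCircle.coe_nsmul]
  exact (norm_le_pi_norm (q • fun k ↦ (ξ k : UnitAddCircle)) k).trans hq

theorem exists_norm_smul_sub_smul_le {ι : Type*} [Fintype ι] {a : ι → ℤ} (ha : a ≠ 0) {M : ℕ}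
    (hM : ‖a‖ = M) {T : ℝ} (hT : 1 ≤ T) :
    ∃ (q : ℕ) (x : ι → ℤ), 0 < q ∧ q ≤ T ^ (Fintype.card ι - 1) ∧
      ‖(M : ℤ) • x - (q : ℤ) • a‖ ≤ M / T := by
  classical
  obtain ⟨k, hk⟩ := exists_norm_apply_eq_norm ha
  have M_pos : (0 : ℝ) < M := hM ▸ norm_pos_iff.2 ha
  set ξ : ι → ℝ := fun i ↦ a i / M
  obtain ⟨q, hq_pos, hq_le, hq⟩ :=
    exists_abs_nat_mul_sub_round_le (fun i : {i // i ≠ k} ↦ ξ i) hT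
  have norm_coord (i : ι) : ‖M * round (q * ξ i) - q * a i‖ =
      M * |q * ξ i - round (q * ξ i)| := by
    have : (M : ℝ) * ξ i = a i := mul_div_cancel₀ _ M_pos.ne'
    rw [Int.norm_eq_abs, abs_sub_comm, ← abs_of_pos M_pos, ← abs_mul]
    push_cast
    rw [← this]
    ring_nf
  refine ⟨q, fun i ↦ round (q * ξ i), hq_pos, by simpa using hq_le,
    (pi_norm_le_iff_of_nonneg (by positivity)).2 fun i ↦ ?_⟩
  rw [Pi.sub_apply, Pi.smul_apply, Pi.smul_apply, smul_eq_mul, smul_eq_mul, norm_coord,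
    div_eq_mul_inv]
  gcongr
  by_cases hik : i = k
  · -- A coordinate of largest absolute value is `± M`, so its approximation is exact.
    obtain ⟨s, hs⟩ : ∃ s : ℤ, q * ξ i = s := by
      subst hik
      rw [hM, Int.norm_eq_abs] at hk
      rcases eq_or_eq_neg_of_abs_eq hk with hai | hai
      · exact ⟨q, by simp [ξ, hai, M_pos.ne']⟩
      · exact ⟨-q, by simp [ξ, hai, M_pos.ne']⟩
    simpa [hs] using (one_pos.trans_le hT).le
  · exact hq ⟨i, hik⟩

end SimultaneousApproximation

theorem norm_two_mul_le {R : Type*} [SeminormedRing R] (r : R) : ‖2 * r‖ ≤ 2 * ‖r‖ := by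
  rw [two_mul, two_mul]
  exact norm_add_le r r

section ScaledReflection

variable {R M : Type*}

/-- The reflection `a - (2 B(x, a) / B(x, x)) x` of `a` in the hyperplane orthogonal to `x`,
multiplied by `B(x, x)` so that no division is needed. -/
def scaledReflection [CommRing R] [AddCommGroup M] [Module R M] (B : LinearMap.BilinForm R M)
    (x a : M) : M :=
  B x x • a - (2 * B x a) • x

section Algebra

variable [CommRing R] [AddCommGroup M] [Module R M] {B : LinearMap.BilinForm R M}

theorem apply_scaledReflection_self (hB : B.IsSymm) (x a : M) :
    B (scaledReflection B x a) (scaledReflection B x a) = B x x ^ 2 * B a a := by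
  simp only [scaledReflection, map_sub, map_smul, LinearMap.sub_apply, LinearMap.smul_apply,
    smul_eq_mul, hB.eq a x]
  ring

theorem apply_scaledReflection_left (hB : B.IsSymm) (x a : M) :
    B (scaledReflection B x a) x = -(B x x * B x a) := by
  simp only [scaledReflection, map_sub, map_smul, LinearMap.sub_apply, LinearMap.smul_apply,
    smul_eq_mul, hB.eq a x]
  ring

theorem apply_smul_sub_smul_self (hB : B.IsSymm) {a : M} (ha : B a a = 0) (x : M) (s t : R) :
    B (s • x - t • a) (s • x - t • a) = s ^ 2 * B x x - 2 * s * t * B x a := by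
  simp only [map_sub, map_smul, LinearMap.sub_apply, LinearMap.smul_apply, smul_eq_mul, ha,
    hB.eq a x]
  ring

theorem scaledReflection_smul_sub_smul (hB : B.IsSymm) {a : M} (ha : B a a = 0) (x : M)
    (s t : R) :
    scaledReflection B (s • x - t • a) a = s ^ 2 • scaledReflection B x a := by
  rw [scaledReflection, apply_smul_sub_smul_self hB ha]
  simp only [scaledReflection, map_sub, map_smul, LinearMap.sub_apply, LinearMap.smul_apply,
    smul_eq_mul, ha]
  module

end Algebra

theorem norm_scaledReflection_le [SeminormedCommRing R] [SeminormedAddCommGroup M] [Module R M]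
    [IsBoundedSMul R M] {B : LinearMap.BilinForm R M} {β : ℝ}
    (hβ : ∀ x y, ‖B x y‖ ≤ β * ‖x‖ * ‖y‖) (x a : M) :
    ‖scaledReflection B x a‖ ≤ 3 * β * ‖x‖ ^ 2 * ‖a‖ := by
  calc ‖scaledReflection B x a‖
      ≤ ‖B x x‖ * ‖a‖ + ‖2 * B x a‖ * ‖x‖ :=
        (norm_sub_le _ _).trans (add_le_add (norm_smul_le _ _) (norm_smul_le _ _))
    _ ≤ β * ‖x‖ * ‖x‖ * ‖a‖ + 2 * (β * ‖x‖ * ‖a‖) * ‖x‖ := by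
        gcongr
        · exact hβ x x
        · exact (norm_two_mul_le _).trans (by gcongr; exact hβ x a)
    _ = 3 * β * ‖x‖ ^ 2 * ‖a‖ := by ring

end ScaledReflection

section IsotropicDescent

section NormedGroup

variable {E : Type*} [NormedAddCommGroup E] {B : LinearMap.BilinForm ℤ E}
  {β : ℝ} {a x : E} {s t : ℤ} {W : Submodule ℤ E}

theorem apply_ne_zero_of_norm_smul_sub_smul_lt (hB : B.IsSymm)
    (hβ : ∀ x y, ‖B x y‖ ≤ β * ‖x‖ * ‖y‖) (ha : B a a = 0) (hx : B x x ≠ 0)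
    (hst : β * ‖s • x - t • a‖ ^ 2 < ‖s‖ ^ 2) : B x a ≠ 0 := by
  intro hxa
  have one_le_norm : 1 ≤ ‖B x x‖ := by
    rw [Int.norm_eq_abs]; exact_mod_cast Int.one_le_abs hx
  refine hst.not_ge ?_
  calc ‖s‖ ^ 2 ≤ ‖s‖ ^ 2 * ‖B x x‖ := le_mul_of_one_le_right (by positivity) one_le_norm
    _ = ‖B (s • x - t • a) (s • x - t • a)‖ := by
        rw [apply_smul_sub_smul_self hB ha, hxa, mul_zero, sub_zero, norm_mul, norm_pow]
    _ ≤ β * ‖s • x - t • a‖ ^ 2 := (hβ _ _).trans_eq (by ring)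

variable [NormSMulClass ℤ E]

theorem norm_lt_of_norm_smul_sub_smul_lt (ht : 0 ≤ t) (hts : t < s)
    (hst : ‖s • x - t • a‖ < ‖a‖) : ‖x‖ < ‖a‖ := by
  have s_pos : (0 : ℝ) < s := by exact_mod_cast ht.trans_lt hts
  have t_nonneg : (0 : ℝ) ≤ t := by exact_mod_cast ht
  have t_add_one_le : (t : ℝ) + 1 ≤ s := by exact_mod_cast hts
  refine lt_of_mul_lt_mul_left ?_ s_pos.le
  calc s * ‖x‖ = ‖(s • x - t • a) + t • a‖ := by
        rw [sub_add_cancel, norm_smul, Int.norm_eq_abs, abs_of_pos s_pos]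
    _ ≤ ‖s • x - t • a‖ + t * ‖a‖ := by
        simpa only [norm_smul, Int.norm_eq_abs, abs_of_nonneg t_nonneg] using
          norm_add_le (s • x - t • a) (t • a)
    _ < ‖a‖ + t * ‖a‖ := by gcongr
    _ = (t + 1) * ‖a‖ := by ring
    _ ≤ s * ‖a‖ := by gcongr

theorem norm_scaledReflection_lt (hB : B.IsSymm) (hβ : ∀ x y, ‖B x y‖ ≤ β * ‖x‖ * ‖y‖)
    (ha : B a a = 0) (ha₀ : a ≠ 0) (hst : 3 * (β * ‖s • x - t • a‖ ^ 2) < ‖s‖ ^ 2) :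
    ‖scaledReflection B x a‖ < ‖a‖ := by
  refine lt_of_mul_lt_mul_left ?_ (sq_nonneg ‖s‖)
  calc ‖s‖ ^ 2 * ‖scaledReflection B x a‖
      = ‖scaledReflection B (s • x - t • a) a‖ := by
        rw [scaledReflection_smul_sub_smul hB ha, norm_smul, norm_pow]
    _ ≤ 3 * (β * ‖s • x - t • a‖ ^ 2) * ‖a‖ :=
        (norm_scaledReflection_le hβ _ _).trans_eq (by ring)
    _ < ‖s‖ ^ 2 * ‖a‖ := by
        have := norm_pos_iff.2 ha₀
        gcongr

theorem exists_isotropic_notMem_norm_lt_of_isotropic (hB : B.IsSymm)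
    (hW : ∀ x ∈ W, B x x = 0 → B x = 0) (haW : a ∉ W) (ha : B a a = 0) (hx : B x x = 0)
    (ht : 0 < t) (hts : t < s) (hst : ‖s • x - t • a‖ < ‖a‖) :
    ∃ b ∉ W, B b b = 0 ∧ ‖b‖ < ‖a‖ := by
  by_cases hxW : x ∈ W
  · have hBx : B x = 0 := hW x hxW hx
    have complement : s • (a - x) - (s - t) • a = -(s • x - t • a) := by module
    refine ⟨a - x, fun h ↦ haW ((W.sub_mem_iff_left hxW).1 h), ?_,
      norm_lt_of_norm_smul_sub_smul_lt (s := s) (t := s - t) (by lia) (by lia) ?_⟩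
    · simp [hBx, ha, hB.eq a x]
    · rwa [complement, norm_neg]
  · exact ⟨x, hxW, hx, norm_lt_of_norm_smul_sub_smul_lt ht.le hts hst⟩

theorem exists_isotropic_notMem_norm_lt_of_anisotropic (hB : B.IsSymm)
    (hβ : ∀ x y, ‖B x y‖ ≤ β * ‖x‖ * ‖y‖) (hW : ∀ x ∈ W, B x x = 0 → B x = 0)
    (ha : B a a = 0) (hx : B x x ≠ 0) (hst : 3 * (β * ‖s • x - t • a‖ ^ 2) < ‖s‖ ^ 2) :
    ∃ b ∉ W, B b b = 0 ∧ ‖b‖ < ‖a‖ := by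
  have hxa : B x a ≠ 0 := by
    have := (norm_nonneg _).trans (hβ (s • x - t • a) (s • x - t • a))
    exact apply_ne_zero_of_norm_smul_sub_smul_lt (s := s) (t := t) hB hβ ha hx (by linarith)
  have ha₀ : a ≠ 0 := fun h ↦ hxa (by rw [h, map_zero])
  have isotropic : B (scaledReflection B x a) (scaledReflection B x a) = 0 := by
    rw [apply_scaledReflection_self hB, ha, mul_zero]
  refine ⟨scaledReflection B x a, fun hmem ↦ ?_, isotropic,
    norm_scaledReflection_lt hB hβ ha ha₀ hst⟩
  have apply_x := apply_scaledReflection_left hB x a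
  rw [hW _ hmem isotropic, LinearMap.zero_apply, zero_eq_neg] at apply_x
  exact mul_ne_zero hx hxa apply_x

end NormedGroup

variable {ι : Type*} [Fintype ι] {B : LinearMap.BilinForm ℤ (ι → ℤ)} {β : ℝ}
  {W : Submodule ℤ (ι → ℤ)}

theorem exists_isotropic_notMem_norm_lt {a : ι → ℤ} (hB : B.IsSymm)
    (hβ : ∀ x y, ‖B x y‖ ≤ β * ‖x‖ * ‖y‖) {T : ℝ} (hT : 1 < T) (hβT : 3 * β < T ^ 2)
    (hW : ∀ x ∈ W, B x x = 0 → B x = 0) (haW : a ∉ W) (ha : B a a = 0)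
    (hTa : T ^ (Fintype.card ι - 1) < ‖a‖) :
    ∃ b ∉ W, B b b = 0 ∧ ‖b‖ < ‖a‖ := by
  have ha₀ : a ≠ 0 := fun h ↦ haW (h ▸ W.zero_mem)
  obtain ⟨M, hM⟩ : ∃ M : ℕ, ‖a‖ = M := ⟨_, norm_eq_sup_natAbs a⟩
  have M_pos : (0 : ℝ) < M := hM ▸ norm_pos_iff.2 ha₀
  obtain ⟨q, x, hq_pos, hq_le, hqx⟩ := exists_norm_smul_sub_smul_le ha₀ hM hT.le
  by_cases hx : B x x = 0
  · refine exists_isotropic_notMem_norm_lt_of_isotropic (s := M) (t := q) hB hW haW ha hx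
      (by exact_mod_cast hq_pos) (by exact_mod_cast hM ▸ hq_le.trans_lt hTa) ?_
    exact hM ▸ hqx.trans_lt (div_lt_self M_pos hT)
  · refine exists_isotropic_notMem_norm_lt_of_anisotropic (s := M) (t := q) hB hβ hW ha hx ?_
    have β_nonneg : 0 ≤ β := by
      have := (norm_nonneg _).trans (hβ a a)
      rw [hM, mul_assoc] at this
      exact nonneg_of_mul_nonneg_left this (by positivity)
    calc 3 * (β * ‖(M : ℤ) • x - (q : ℤ) • a‖ ^ 2) ≤ 3 * (β * (M / T) ^ 2) := by gcongr
      _ = 3 * β / T ^ 2 * M ^ 2 := by ring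
      _ < M ^ 2 := mul_lt_of_lt_one_left (by positivity) ((div_lt_one (by positivity)).2 hβT)
      _ = ‖(M : ℤ)‖ ^ 2 := by rw [Int.norm_natCast]

theorem exists_isotropic_notMem_norm_le (hB : B.IsSymm) (hβ : ∀ x y, ‖B x y‖ ≤ β * ‖x‖ * ‖y‖)
    {T : ℝ} (hT : 1 < T) (hβT : 3 * β < T ^ 2) (hW : ∀ x ∈ W, B x x = 0 → B x = 0)
    (hex : ∃ a ∉ W, B a a = 0) :
    ∃ a ∉ W, B a a = 0 ∧ ‖a‖ ≤ T ^ (Fintype.card ι - 1) := by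
  have norm_tendsto : Filter.Tendsto (norm : (ι → ℤ) → ℝ) Filter.cofinite Filter.atTop :=
    Filter.cocompact_eq_cofinite (ι → ℤ) ▸ tendsto_norm_cocompact_atTop
  obtain ⟨a, ⟨haW, ha⟩, a_min⟩ :=
    norm_tendsto.exists_within_forall_le (s := {a | a ∉ W ∧ B a a = 0}) hex
  refine ⟨a, haW, ha, not_lt.1 fun hTa ↦ ?_⟩
  obtain ⟨b, hbW, hb, hba⟩ := exists_isotropic_notMem_norm_lt hB hβ hT hβT hW haW ha hTa
  exact (a_min b ⟨hbW, hb⟩).not_gt hba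

end IsotropicDescent

section NonzeroCoordinate

theorem exists_norm_le_one_apply_ne_zero {ι P : Type*} [Fintype ι] [AddCommGroup P]
    {φ : (ι → ℤ) →ₗ[ℤ] P} (hφ : φ ≠ 0) (k : ι) : ∃ y : ι → ℤ, y k ≠ 0 ∧ ‖y‖ ≤ 1 ∧ φ y ≠ 0 := by
  classical
  by_cases hk : φ (Pi.single k 1) = 0
  · obtain ⟨i, hi⟩ : ∃ i, φ (Pi.single i 1) ≠ 0 := by
      by_contra! h
      exact hφ (LinearMap.pi_ext' fun i ↦ LinearMap.ext_ring (h i))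
    have hik : i ≠ k := fun h ↦ hi (h ▸ hk)
    refine ⟨Pi.single k 1 + Pi.single i 1, by simp [hik.symm], ?_, by simpa [hk] using hi⟩
    refine (pi_norm_le_iff_of_nonneg zero_le_one).2 fun j ↦ ?_
    rcases eq_or_ne j k with rfl | hjk
    · simp [hik.symm]
    · rcases eq_or_ne j i with rfl | hji
      · simp [hik]
      · simp [hjk, hji]
  · exact ⟨Pi.single k 1, by simp, by simp [Pi.norm_single], hk⟩

theorem norm_vecCons_zero {n : ℕ} {R : Type*} [SeminormedAddCommGroup R] (a : Fin n → R) :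
    ‖(Matrix.vecCons 0 a : Fin (n + 1) → R)‖ = ‖a‖ := by
  refine le_antisymm ((pi_norm_le_iff_of_nonneg (norm_nonneg a)).2 <| Fin.forall_fin_succ.2
    ⟨by simp, fun i ↦ by simpa using norm_le_pi_norm a i⟩)
    ((pi_norm_le_iff_of_nonneg (norm_nonneg _)).2 fun i ↦ ?_)
  simpa using norm_le_pi_norm (Matrix.vecCons 0 a) i.succ

variable {n : ℕ} {B : LinearMap.BilinForm ℤ (Fin (n + 1) → ℤ)} {β : ℝ}

theorem exists_isotropic_coord_eq_zero_norm_le (hB : B.IsSymm)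
    (hβ : ∀ x y, ‖B x y‖ ≤ β * ‖x‖ * ‖y‖) {T : ℝ} (hT : 1 < T) (hβT : 3 * β < T ^ 2)
    (hex : ∃ a, a 0 = 0 ∧ B a a = 0 ∧ B a ≠ 0) :
    ∃ a, a 0 = 0 ∧ B a a = 0 ∧ B a ≠ 0 ∧ ‖a‖ ≤ T ^ (n - 1) := by
  let φ : (Fin n → ℤ) →ₗ[ℤ] (Fin (n + 1) → ℤ) := LinearMap.vecCons 0 LinearMap.id
  have norm_φ (x : Fin n → ℤ) : ‖φ x‖ = ‖x‖ := norm_vecCons_zero x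
  have φ_tail {a : Fin (n + 1) → ℤ} (ha : a 0 = 0) : φ (Fin.tail a) = a := by
    funext i
    cases i using Fin.cases <;> simp [φ, ha, Fin.tail]
  obtain ⟨b, hbW, hb, hb_le⟩ := exists_isotropic_notMem_norm_le (B := B.comp φ φ) (β := β)
    (W := (LinearMap.ker B).comap φ) ⟨fun x y ↦ hB.eq _ _⟩
    (fun x y ↦ (hβ (φ x) (φ y)).trans_eq (by rw [norm_φ, norm_φ])) hT hβT
    (fun x hx _ ↦ by
      ext y
      simpa using LinearMap.congr_fun (LinearMap.mem_ker.1 hx) (φ (Pi.single y 1)))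
    (by
      obtain ⟨a, ha₀, ha, hBa⟩ := hex
      exact ⟨Fin.tail a, by simpa [φ_tail ha₀] using hBa, by simpa [φ_tail ha₀] using ha⟩)
  exact ⟨φ b, rfl, hb, hbW, by simpa only [norm_φ, Fintype.card_fin] using hb_le⟩

theorem exists_isotropic_coord_ne_zero_of_coord_eq_zero (hB : B.IsSymm)
    (hβ : ∀ x y, ‖B x y‖ ≤ β * ‖x‖ * ‖y‖) {a : Fin (n + 1) → ℤ} (ha₀ : a 0 = 0) (ha : B a a = 0)
    (hBa : B a ≠ 0) : ∃ v, v 0 ≠ 0 ∧ B v v = 0 ∧ ‖v‖ ≤ 3 * β * ‖a‖ := by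
  obtain ⟨y, hy₀, hy_le, hay⟩ := exists_norm_le_one_apply_ne_zero hBa 0
  refine ⟨scaledReflection B y a, ?_, by rw [apply_scaledReflection_self hB, ha, mul_zero], ?_⟩
  · simpa [scaledReflection, ha₀, hB.eq y a] using ⟨hay, hy₀⟩
  · have norm_y : ‖y‖ = 1 := hy_le.antisymm
      (one_le_norm_of_ne_zero fun h ↦ hy₀ (congrFun h 0))
    simpa only [norm_y, one_pow, mul_one] using norm_scaledReflection_le hβ y a

theorem exists_isotropic_coord_ne_zero_norm_le (hB : B.IsSymm)
    (hβ : ∀ x y, ‖B x y‖ ≤ β * ‖x‖ * ‖y‖) (hβ₁ : 1 ≤ β) (hex : ∃ v, v 0 ≠ 0 ∧ B v v = 0) :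
    ∃ v, v 0 ≠ 0 ∧ B v v = 0 ∧ ‖v‖ ≤ 3 * 2 ^ n * √β ^ (n + 1) := by
  have sqrt_sq : √β ^ 2 = β := Real.sq_sqrt (by positivity)
  have one_le_sqrt : 1 ≤ √β := Real.one_le_sqrt.2 hβ₁
  have one_lt_T : 1 < 2 * √β := by linarith
  have three_mul_lt_T_sq : 3 * β < (2 * √β) ^ 2 := by rw [mul_pow, sqrt_sq]; linarith
  by_cases hyperplane : ∃ a, a 0 = 0 ∧ B a a = 0 ∧ B a ≠ 0
  · obtain ⟨a, ha₀, ha, hBa, ha_le⟩ :=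
      exists_isotropic_coord_eq_zero_norm_le hB hβ one_lt_T three_mul_lt_T_sq hyperplane
    obtain ⟨v, hv₀, hv, hv_le⟩ := exists_isotropic_coord_ne_zero_of_coord_eq_zero hB hβ ha₀ ha hBa
    obtain ⟨m, rfl⟩ : ∃ m, n = m + 1 := Nat.exists_eq_succ_of_ne_zero <| by
      rintro rfl
      exact hBa (by rw [show a = 0 from funext (Fin.forall_fin_one.2 ha₀), map_zero])
    refine ⟨v, hv₀, hv, hv_le.trans ?_⟩
    calc 3 * β * ‖a‖ ≤ 3 * √β ^ 2 * (2 * √β) ^ m := by rw [sqrt_sq]; gcongr; exact ha_le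
      _ = 3 * 2 ^ m * √β ^ (m + 1 + 1) := by rw [mul_pow]; ring
      _ ≤ 3 * 2 ^ (m + 1) * √β ^ (m + 1 + 1) := by gcongr <;> norm_num
  · push Not at hyperplane
    obtain ⟨v, hv₀, hv, hv_le⟩ := exists_isotropic_notMem_norm_le
      (W := LinearMap.ker (LinearMap.proj 0)) hB hβ one_lt_T three_mul_lt_T_sq hyperplane hex
    refine ⟨v, hv₀, hv, hv_le.trans ?_⟩
    calc (2 * √β) ^ (Fintype.card (Fin (n + 1)) - 1) = 1 * 2 ^ n * √β ^ n := by
          rw [Fintype.card_fin, Nat.add_sub_cancel, mul_pow, one_mul]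
      _ ≤ 3 * 2 ^ n * √β ^ (n + 1) := by gcongr <;> norm_num

end NonzeroCoordinate

section Height

variable {ι : Type*} {x : ι → ℚ} {y : ι → ℤ}

/-- The integer vector `y` represents the projective point of the rational vector `x`; unlike in
`projHeight`, the coordinates of `y` may have a common factor. -/
def IsIntegralRep (x : ι → ℚ) (y : ι → ℤ) : Prop :=
  ∃ c : ℚ, c ≠ 0 ∧ ∀ i, (y i : ℚ) = c * x i

theorem IsIntegralRep.eq_zero_iff (h : IsIntegralRep x y) : y = 0 ↔ x = 0 := by
  obtain ⟨c, hc, hy⟩ := h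
  simp only [funext_iff, Pi.zero_apply, ← Int.cast_eq_zero (α := ℚ), hy, mul_eq_zero, hc, false_or]

theorem exists_isIntegralRep [Finite ι] (x : ι → ℚ) : ∃ y, IsIntegralRep x y := by
  obtain ⟨c, hc⟩ := IsLocalization.exist_integer_multiples_of_finite (nonZeroDivisors ℤ) x
  choose y hy using hc
  refine ⟨y, c, Int.cast_ne_zero.2 (nonZeroDivisors.coe_ne_zero c), fun i ↦ ?_⟩
  simpa [Submonoid.smul_def] using hy i

variable [Fintype ι]

theorem IsIntegralRep.exists_primitive (h : IsIntegralRep x y) (hy₀ : y ≠ 0) :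
    ∃ z, IsIntegralRep x z ∧ Finset.univ.gcd z = 1 ∧ ‖z‖ ≤ ‖y‖ := by
  obtain ⟨c, hc, hy⟩ := h
  obtain ⟨k, hk⟩ := Function.ne_iff.1 hy₀
  obtain ⟨z, hz, z_gcd⟩ := Finset.extract_gcd y ⟨k, Finset.mem_univ k⟩
  set g := Finset.univ.gcd y
  have hyz : y = g • z := funext fun i ↦ hz i (Finset.mem_univ i)
  have hg : g ≠ 0 := fun hg ↦ hk (by simp [hyz, hg])
  refine ⟨z, ⟨c / g, div_ne_zero hc (Int.cast_ne_zero.2 hg), fun i ↦ ?_⟩, z_gcd, ?_⟩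
  · rw [div_mul_eq_mul_div, ← hy, eq_div_iff (Int.cast_ne_zero.2 hg), mul_comm]
    exact_mod_cast (hz i (Finset.mem_univ i)).symm
  · rw [hyz, norm_smul, Int.norm_eq_abs]
    exact le_mul_of_one_le_left (norm_nonneg z) (by exact_mod_cast Int.one_le_abs hg)

theorem IsIntegralRep.projHeight_le_norm (h : IsIntegralRep x y) (hy₀ : y ≠ 0) :
    projHeight x ≤ ‖y‖ := by
  obtain ⟨z, hz, z_gcd, hzy⟩ := h.exists_primitive hy₀
  refine le_trans ?_ hzy
  rw [norm_eq_sup_natAbs]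
  exact_mod_cast (Nat.sInf_le ⟨z, hz, z_gcd, rfl⟩ : projHeight x ≤ _)

theorem exists_isIntegralRep_norm_eq_projHeight (hx : x ≠ 0) :
    ∃ y, IsIntegralRep x y ∧ ‖y‖ = projHeight x := by
  obtain ⟨y, hy⟩ := exists_isIntegralRep x
  obtain ⟨z, hz, z_gcd, -⟩ := hy.exists_primitive (hy.eq_zero_iff.not.2 hx)
  obtain ⟨w, hw, -, hwx⟩ : projHeight x ∈ _ := Nat.sInf_mem ⟨_, z, hz, z_gcd, rfl⟩
  exact ⟨w, hw, by rw [norm_eq_sup_natAbs, hwx]⟩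

end Height

section Homogenization

theorem norm_toBilin'_le {ι R : Type*} [Fintype ι] [DecidableEq ι] [SeminormedCommRing R]
    {G : Matrix ι ι R} {h : ℝ} (hG : ∀ i j, ‖G i j‖ ≤ h) (x y : ι → R) :
    ‖G.toBilin' x y‖ ≤ Fintype.card ι ^ 2 * h * ‖x‖ * ‖y‖ := by
  have norm_term_le (i j : ι) : ‖x i * G i j * y j‖ ≤ ‖x‖ * h * ‖y‖ := by
    have := (norm_nonneg _).trans (hG i j)
    have := norm_le_pi_norm x i
    have := norm_le_pi_norm y j
    exact (norm_mul₃_le).trans (by gcongr; exact hG i j)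
  rw [Matrix.toBilin'_apply]
  calc ‖∑ i, ∑ j, x i * G i j * y j‖ ≤ ∑ _i : ι, ∑ _j : ι, ‖x‖ * h * ‖y‖ :=
        norm_sum_le_of_le _ fun i _ ↦ norm_sum_le_of_le _ fun j _ ↦ norm_term_le i j
    _ = Fintype.card ι ^ 2 * h * ‖x‖ * ‖y‖ := by
        simp only [Finset.sum_const, Finset.card_univ, nsmul_eq_mul]; ring

variable {n : ℕ} {R : Type*}

/-- The vector of coefficients of `∑ f i j X_i X_j + ∑ l i X_i + A`, indexed as in
`quadPolyHeight`. -/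
def coeffVector (f : Fin n → Fin n → R) (l : Fin n → R) (A : R) :
    (Fin n × Fin n) ⊕ (Fin n ⊕ Unit) → R :=
  Sum.elim (fun p ↦ f p.1 p.2) (Sum.elim l fun _ ↦ A)

theorem coeffVector_ne_zero [Zero R] {f : Fin n → Fin n → R} (hf : f ≠ 0) (l : Fin n → R)
    (A : R) : coeffVector f l A ≠ 0 :=
  fun h ↦ hf (funext₂ fun i j ↦ congrFun h (.inl (i, j)))

theorem exists_eq_coeffVector (y : (Fin n × Fin n) ⊕ (Fin n ⊕ Unit) → R) :
    ∃ f l A, y = coeffVector f l A := by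
  refine ⟨fun i j ↦ y (.inl (i, j)), fun i ↦ y (.inr (.inl i)), y (.inr (.inr ())), ?_⟩
  ext (_ | _ | _) <;> rfl

/-- The Gram matrix of twice the homogenization of `∑ f i j X_i X_j + ∑ l i X_i + A`, with the
homogenizing variable in position `0`; the factor two avoids halving the coefficients of `l`. -/
def homogMatrix [CommRing R] (f : Fin n → Fin n → R) (l : Fin n → R) (A : R) :
    Matrix (Fin (n + 1)) (Fin (n + 1)) R :=
  Matrix.of <| Matrix.vecCons (Matrix.vecCons (2 * A) l)
    fun i ↦ Matrix.vecCons (l i) fun j ↦ 2 * f i j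

theorem isSymm_homogMatrix [CommRing R] {f : Fin n → Fin n → R} (hf : ∀ i j, f i j = f j i)
    (l : Fin n → R) (A : R) : (homogMatrix f l A).IsSymm := by
  refine Matrix.IsSymm.ext fun i j ↦ ?_
  cases i using Fin.cases <;> cases j using Fin.cases <;> simp [homogMatrix, hf]

theorem norm_homogMatrix_apply_le [SeminormedCommRing R] (f : Fin n → Fin n → R) (l : Fin n → R)
    (A : R) (i j : Fin (n + 1)) : ‖homogMatrix f l A i j‖ ≤ 2 * ‖coeffVector f l A‖ := by
  have norm_coeff_le := norm_le_pi_norm (coeffVector f l A)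
  have norm_two_mul_coeff_le (k) : ‖2 * coeffVector f l A k‖ ≤ 2 * ‖coeffVector f l A‖ :=
    (norm_two_mul_le _).trans (by gcongr; exact norm_coeff_le k)
  have norm_coeff_le_two_mul (k) : ‖coeffVector f l A k‖ ≤ 2 * ‖coeffVector f l A‖ := by
    linarith [norm_coeff_le k, norm_nonneg (coeffVector f l A)]
  cases i using Fin.cases with
  | zero =>
    cases j using Fin.cases with
    | zero => exact norm_two_mul_coeff_le (.inr (.inr ()))
    | succ j => exact norm_coeff_le_two_mul (.inr (.inl j))
  | succ i =>
    cases j using Fin.cases with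
    | zero => exact norm_coeff_le_two_mul (.inr (.inl i))
    | succ j => exact norm_two_mul_coeff_le (.inl (i, j))

theorem toBilin'_homogMatrix_self [CommRing R] (f : Fin n → Fin n → R) (l : Fin n → R) (A : R)
    (v : Fin (n + 1) → R) :
    (homogMatrix f l A).toBilin' v v =
      2 * (∑ i, ∑ j, f i j * v i.succ * v j.succ + v 0 * ∑ i, l i * v i.succ + v 0 ^ 2 * A) := by
  have linear_row : ∑ j, v 0 * l j * v j.succ = v 0 * ∑ i, l i * v i.succ := by
    simp only [Finset.mul_sum, mul_assoc]
  have linear_column : ∑ i, v i.succ * l i * v 0 = v 0 * ∑ i, l i * v i.succ := by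
    simp only [Finset.mul_sum, mul_comm]
  have quadratic_block : ∑ i, ∑ j, v i.succ * (2 * f i j) * v j.succ =
      2 * ∑ i, ∑ j, f i j * v i.succ * v j.succ := by
    simp only [Finset.mul_sum]
    exact Finset.sum_congr rfl fun i _ ↦ Finset.sum_congr rfl fun j _ ↦ by ring
  simp only [Matrix.toBilin'_apply, homogMatrix, Fin.sum_univ_succ, Matrix.of_apply,
    Matrix.cons_val_zero, Matrix.cons_val_succ, Finset.sum_add_distrib, linear_row,
    linear_column, quadratic_block]
  ring

theorem toBilin'_homogMatrix_self_eq_zero_iff {f : Fin n → Fin n → ℚ} {l : Fin n → ℚ} {A : ℚ}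
    {g : Fin n → Fin n → ℤ} {m : Fin n → ℤ} {D : ℤ} {x : Fin n → ℚ} {v : Fin (n + 1) → ℤ}
    (hg : IsIntegralRep (coeffVector f l A) (coeffVector g m D))
    (hv : IsIntegralRep (Fin.cons 1 x) v) :
    (homogMatrix g m D).toBilin' v v = 0 ↔
      ∑ i, ∑ j, f i j * x i * x j + ∑ i, l i * x i + A = 0 := by
  obtain ⟨c, hc, hcg⟩ := hg
  obtain ⟨d, hd, hdv⟩ := hv
  have hg (i j) : (g i j : ℚ) = c * f i j := hcg (.inl (i, j))
  have hm (i) : (m i : ℚ) = c * l i := hcg (.inr (.inl i))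
  have hD : (D : ℚ) = c * A := hcg (.inr (.inr ()))
  have hv₀ : (v 0 : ℚ) = d := by simpa using hdv 0
  have hv (i : Fin n) : (v i.succ : ℚ) = d * x i := by simpa using hdv i.succ
  have quadratic_part : ∑ i, ∑ j, c * f i j * (d * x i) * (d * x j) =
      c * d ^ 2 * ∑ i, ∑ j, f i j * x i * x j := by
    simp only [Finset.mul_sum]
    exact Finset.sum_congr rfl fun i _ ↦ Finset.sum_congr rfl fun j _ ↦ by ring
  have linear_part : ∑ i, c * l i * (d * x i) = c * d * ∑ i, l i * x i := by
    simp only [Finset.mul_sum]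
    exact Finset.sum_congr rfl fun i _ ↦ by ring
  have cast_eq : ((homogMatrix g m D).toBilin' v v : ℚ) =
      2 * c * d ^ 2 * (∑ i, ∑ j, f i j * x i * x j + ∑ i, l i * x i + A) := by
    rw [toBilin'_homogMatrix_self]
    push_cast
    simp only [hg, hm, hD, hv₀, hv, quadratic_part, linear_part]
    ring
  rw [← Int.cast_eq_zero (α := ℚ), cast_eq]
  simp [hc, hd]

theorem IsIntegralRep.head_ne_zero {x : Fin n → ℚ} {v : Fin (n + 1) → ℤ}
    (hv : IsIntegralRep (Fin.cons 1 x) v) : v 0 ≠ 0 := by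
  obtain ⟨d, hd, hdv⟩ := hv
  have hv₀ : (v 0 : ℚ) = d := by simpa using hdv 0
  exact_mod_cast hv₀ ▸ hd

theorem isIntegralRep_cons_one_div {v : Fin (n + 1) → ℤ} (hv₀ : v 0 ≠ 0) :
    IsIntegralRep (Fin.cons 1 fun i ↦ (v i.succ / v 0 : ℚ)) v := by
  have hv₀' : (v 0 : ℚ) ≠ 0 := Int.cast_ne_zero.2 hv₀
  refine ⟨v 0, hv₀', fun i ↦ ?_⟩
  cases i using Fin.cases
  · simp
  · simp [mul_div_cancel₀, hv₀']

end Homogenization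

theorem exists_isotropic_homogMatrix_norm_le {n : ℕ} {g : Fin n → Fin n → ℤ}
    (hg : ∀ i j, g i j = g j i) {m : Fin n → ℤ} {D : ℤ} (hQ : coeffVector g m D ≠ 0)
    (hex : ∃ v, v 0 ≠ 0 ∧ (homogMatrix g m D).toBilin' v v = 0) :
    ∃ v, v 0 ≠ 0 ∧ (homogMatrix g m D).toBilin' v v = 0 ∧
      ‖v‖ ≤ 3 * 2 ^ n * √(2 * (n + 1) ^ 2) ^ (n + 1) * √‖coeffVector g m D‖ ^ (n + 1) := by
  set H := ‖coeffVector g m D‖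
  have one_le_H : 1 ≤ H := one_le_norm_of_ne_zero hQ
  have norm_le (x y) : ‖(homogMatrix g m D).toBilin' x y‖ ≤
      2 * (n + 1) ^ 2 * H * ‖x‖ * ‖y‖ := by
    refine (norm_toBilin'_le (norm_homogMatrix_apply_le g m D) x y).trans_eq ?_
    rw [Fintype.card_fin]
    push_cast
    ring
  have one_le_bound : 1 ≤ 2 * ((n : ℝ) + 1) ^ 2 * H := by
    have : (0 : ℝ) ≤ n := n.cast_nonneg
    nlinarith
  have isSymm : (homogMatrix g m D).toBilin'.IsSymm :=
    Matrix.isSymm_toBilin'_iff_isSymm.2 (isSymm_homogMatrix hg m D)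
  have sqrt_bound : √(2 * ((n : ℝ) + 1) ^ 2 * H) = √(2 * (n + 1) ^ 2) * √H :=
    Real.sqrt_mul (by positivity) H
  simpa only [sqrt_bound, mul_pow, ← mul_assoc] using
    exists_isotropic_coord_ne_zero_norm_le isSymm norm_le one_le_bound hex

/-- **Masser: "How to solve a quadratic equation in rationals".** For every `N ≥ 2` there is a
constant `C_N` such that every quadratic polynomial `Q = F + L + A` over ℚ in `N` variables with
nonzero quadratic part `F`, which has a rational zero, has a rational zero `x` with
`h(x) ≤ C_N · H(Q)^((N+1)/2)`. -/
theorem masser_rational_zeros (N : ℕ) (hN : 2 ≤ N) :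
    ∃ C : ℝ, 0 < C ∧
      ∀ (f : Fin N → Fin N → ℚ) (l : Fin N → ℚ) (A : ℚ),
      (∀ i j, f i j = f j i) → f ≠ 0 →
      (∃ x : Fin N → ℚ, ∑ i, ∑ j, f i j * x i * x j + ∑ i, l i * x i + A = 0) →
      ∃ x : Fin N → ℚ, (∑ i, ∑ j, f i j * x i * x j + ∑ i, l i * x i + A = 0) ∧
        ((inhomHeight x : ℕ) : ℝ) ≤
          C * ((quadPolyHeight f l A : ℕ) : ℝ) ^ (((N : ℝ) + 1) / 2) := by
  refine ⟨3 * 2 ^ N * √(2 * (N + 1) ^ 2) ^ (N + 1), by positivity, ?_⟩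
  rintro f l A hf hf₀ ⟨x, hx⟩
  obtain ⟨y, hy, norm_y⟩ := exists_isIntegralRep_norm_eq_projHeight (coeffVector_ne_zero hf₀ l A)
  obtain ⟨g, m, D, rfl⟩ := exists_eq_coeffVector y
  have hg : ∀ i j, g i j = g j i := by
    obtain ⟨c, -, hc⟩ := hy
    intro i j
    have cast_eq : (g i j : ℚ) = g j i :=
      (hc (.inl (i, j))).trans ((congrArg (c * ·) (hf i j)).trans (hc (.inl (j, i))).symm)
    exact_mod_cast cast_eq
  obtain ⟨v, hv⟩ := exists_isIntegralRep (Fin.cons 1 x : Fin (N + 1) → ℚ)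
  obtain ⟨w, hw₀, hw, hw_le⟩ := exists_isotropic_homogMatrix_norm_le hg
    (hy.eq_zero_iff.not.2 (coeffVector_ne_zero hf₀ l A))
    ⟨v, hv.head_ne_zero, (toBilin'_homogMatrix_self_eq_zero_iff hy hv).2 hx⟩
  have hw_rep := isIntegralRep_cons_one_div hw₀
  refine ⟨_, (toBilin'_homogMatrix_self_eq_zero_iff hy hw_rep).1 hw,
    (hw_rep.projHeight_le_norm fun h ↦ hw₀ (congrFun h 0)).trans (hw_le.trans_eq ?_)⟩
  rw [norm_y, Real.rpow_div_two_eq_sqrt _ (Nat.cast_nonneg _), ← Nat.cast_add_one,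
    Real.rpow_natCast]
  rfl
end
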